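/- For every 1 < q < +∞ there exists a constant C_q > 0 such that for every divergence-free Schwartz vector field u : ℝ³ → ℝ³ (i.e. each component of u is a Schwartz function and ∇·u = 0), with strain tensor S, one has ‖∇u₃‖_{L^q} + ‖∂₃u‖_{L^q} ≤ C_q ‖2 S e₃‖_{L^q}. -/

import Mathlib

open MeasureTheory

noncomputable section

/-- The standard basis vectors of `EuclideanSpace ℝ (Fin 3)`. -/
def ee (i : Fin 3) : EuclideanSpace ℝ (Fin 3) := EuclideanSpace.single i 1

/-- The partial derivative `∂ᵢ uⱼ` of a vector field given by its three
(Schwartz) components. -/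
def pdW (u : Fin 3 → SchwartzMap (EuclideanSpace ℝ (Fin 3)) ℝ) (i j : Fin 3)
    (x : EuclideanSpace ℝ (Fin 3)) : ℝ :=
  fderiv ℝ (u j) x (ee i)

/-- View a triple of reals as a vector in `ℝ³` with the Euclidean norm. -/
def toE3 (f : Fin 3 → ℝ) : EuclideanSpace ℝ (Fin 3) :=
  (WithLp.equiv 2 (Fin 3 → ℝ)).symm f

/-- The strain tensor `S_ij = (∂ᵢ uⱼ + ∂ⱼ uᵢ)/2`. -/
def strainW (u : Fin 3 → SchwartzMap (EuclideanSpace ℝ (Fin 3)) ℝ)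
    (x : EuclideanSpace ℝ (Fin 3)) : Matrix (Fin 3) (Fin 3) ℝ :=
  Matrix.of fun i j => (pdW u i j x + pdW u j i x) / 2

namespace HeatCZ
open ProbabilityTheory Filter Topology Set
open scoped SchwartzMap LineDeriv Laplacian RealInnerProductSpace

abbrev E3 := EuclideanSpace ℝ (Fin 3)

/-- standard Gaussian measure -/
abbrev gam : Measure E3 := stdGaussian E3

/-- heat flow -/
def P (t : ℝ) (f : E3 → ℝ) (x : E3) : ℝ := ∫ z, f (x + √t • z) ∂gam

lemma gsemi_measure (s t : ℝ) (hs : 0 ≤ s) (ht : 0 ≤ t) :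
    (gam.prod gam).map (fun z : E3 × E3 => √s • z.1 + √t • z.2) = gam.map (fun z => √(s+t) • z) := by
  have h1 : (gam.prod gam).map (fun z : E3 × E3 => √s • z.1 + √t • z.2)
      = ((gam.map (fun z => √s • z)).conv (gam.map (fun z => √t • z))) := by
    rw [Measure.conv, Measure.map_prod_map _ _ (by fun_prop) (by fun_prop), Measure.map_map (by fun_prop) (by fun_prop)]
    rfl
  rw [h1]
  have : IsProbabilityMeasure (gam.map (fun z => √s • z)) :=
    Measure.isProbabilityMeasure_map (by fun_prop)
  have : IsProbabilityMeasure (gam.map (fun z => √t • z)) :=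
    Measure.isProbabilityMeasure_map (by fun_prop)
  have : IsProbabilityMeasure (gam.map (fun z => √(s+t) • z)) :=
    Measure.isProbabilityMeasure_map (by fun_prop)
  apply Measure.ext_of_charFun
  ext a
  rw [charFun_conv, charFun_map_smul, charFun_map_smul, charFun_map_smul, charFun_stdGaussian,
    charFun_stdGaussian, charFun_stdGaussian, ← Complex.exp_add]
  congr 1
  simp only [norm_smul, Real.norm_eq_abs]
  norm_cast
  rw [mul_pow, mul_pow, mul_pow, sq_abs, sq_abs, sq_abs, Real.sq_sqrt hs, Real.sq_sqrt ht, Real.sq_sqrt (by positivity)]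
  ring

lemma gsemi {F : E3 → ℝ} (hF : Continuous F) {M : ℝ} (hM : ∀ x, |F x| ≤ M) (s t : ℝ) (hs : 0 ≤ s) (ht : 0 ≤ t) :
    ∫ z, ∫ z', F (√s • z + √t • z') ∂gam ∂gam = ∫ z, F (√(s+t) • z) ∂gam := by
  have h := gsemi_measure s t hs ht
  have h2 : ∫ y, F y ∂((gam.prod gam).map (fun z : E3 × E3 => √s • z.1 + √t • z.2)) = ∫ y, F y ∂(gam.map (fun z => √(s+t) • z)) := by
    rw [h]
  rw [integral_map (by fun_prop) hF.aestronglyMeasurable, integral_map (by fun_prop) hF.aestronglyMeasurable] at h2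
  rw [← h2, integral_prod]
  apply Integrable.of_bound (C := M)
  · exact (hF.comp (by fun_prop)).aestronglyMeasurable
  · exact Eventually.of_forall fun z => hM _

/-- density -/
def dens (z : E3) : ℝ := ((2 * Real.pi) ^ (-(3/2) : ℝ)) * Real.exp (-(1/2) * ‖z‖ ^ 2)

lemma dens_pos (z : E3) : 0 < dens z := by unfold dens; positivity

lemma dens_cont : Continuous dens := by unfold dens; fun_prop

lemma dens_integrable : Integrable dens := by
  unfold dens
  apply Integrable.const_mul
  have := GaussianFourier.integrable_cexp_neg_mul_sq_norm_add (V := E3) (b := 1/2) (by norm_num) 0 0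
  have h2 := this.norm
  refine h2.congr (Eventually.of_forall fun z => ?_)
  simp only [Complex.norm_exp]
  congr 1
  simp [← Complex.ofReal_pow]

lemma gam_eq : gam = volume.withDensity (fun z => ENNReal.ofReal (dens z)) := by
  have : IsFiniteMeasure (volume.withDensity (fun z => ENNReal.ofReal (dens z))) :=
    isFiniteMeasure_withDensity_ofReal dens_integrable.2
  apply Measure.ext_of_charFun
  ext a
  rw [charFun_stdGaussian, charFun_apply, integral_withDensity_eq_integral_toReal_smul]
  · have := GaussianFourier.integral_cexp_neg_mul_sq_norm_add (V := E3) (b := 1/2) (by norm_num) Complex.I a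
    have e : ∀ x : E3, (ENNReal.ofReal (dens x)).toReal • Complex.exp (⟪x, a⟫ * Complex.I)
       = (((2 * Real.pi) ^ (-(3/2) : ℝ) : ℝ) : ℂ) * Complex.exp (-(1/2) * ‖x‖^2 + Complex.I * ⟪a, x⟫) := by
      intro x
      rw [ENNReal.toReal_ofReal (dens_pos x).le, dens, Complex.exp_add, real_inner_comm, mul_comm Complex.I]
      rw [Complex.real_smul]
      push_cast
      ring
    simp_rw [e]
    rw [integral_const_mul, this]
    have h3 : ((Real.pi : ℂ) / (1/2)) ^ ((Module.finrank ℝ E3 : ℂ) / 2) = (((2 * Real.pi) ^ ((3/2) : ℝ) : ℝ) : ℂ) := by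
      rw [Complex.ofReal_cpow (by positivity)]
      simp
      congr 1
      ring
    rw [h3, ← mul_assoc, ← Complex.ofReal_mul, ← Real.rpow_add (by positivity)]
    simp
    ring_nf
  · exact dens_cont.measurable.ennreal_ofReal
  · simp

lemma integral_gam (F : E3 → ℝ) : ∫ z, F z ∂gam = ∫ z, dens z * F z := by
  rw [gam_eq, integral_withDensity_eq_integral_toReal_smul dens_cont.measurable.ennreal_ofReal (by simp)]
  simp_rw [ENNReal.toReal_ofReal (dens_pos _).le, smul_eq_mul]

lemma integrable_gam {F : E3 → ℝ} : Integrable F gam ↔ Integrable (fun z => dens z * F z) := by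
  rw [gam_eq, integrable_withDensity_iff_integrable_smul' dens_cont.measurable.ennreal_ofReal (by simp)]
  simp_rw [ENNReal.toReal_ofReal (dens_pos _).le, smul_eq_mul]

lemma dens_fderiv (z : E3) (i : Fin 3) : fderiv ℝ dens z (ee i) = - (z i * dens z) := by
  have h : HasFDerivAt dens (((2 * Real.pi) ^ (-(3/2) : ℝ)) • (Real.exp (-(1/2) * ‖z‖ ^ 2) • ((-(1/2):ℝ) • (2 • innerSL ℝ z)))) z := by
    unfold dens
    exact (((hasStrictFDerivAt_norm_sq z).hasFDerivAt.const_mul _).exp).const_mul _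
  rw [h.fderiv]
  have : ⟪z, ee i⟫ = z i := by simp [ee, EuclideanSpace.inner_single_right]
  simp [dens, this]
  ring

lemma dens_diff : Differentiable ℝ dens := fun z => by
  unfold dens
  exact ((((hasStrictFDerivAt_norm_sq z).hasFDerivAt.const_mul _).exp).const_mul _).differentiableAt

lemma gam_norm_integrable : Integrable (fun z : E3 => ‖z‖) gam :=
  IsGaussian.integrable_id.norm

lemma coord_le (z : E3) (i : Fin 3) : |z i| ≤ ‖z‖ := by
  simpa using PiLp.norm_apply_le z i

lemma gam_coord_integrable (i : Fin 3) : Integrable (fun z : E3 => z i) gam := by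
  refine gam_norm_integrable.mono' (by fun_prop) (Eventually.of_forall fun z => coord_le z i)

lemma gibp {F : E3 → ℝ} (hF : ContDiff ℝ 1 F) {M M' : ℝ} (hM : ∀ x, |F x| ≤ M) (i : Fin 3)
    (hM' : ∀ x, |fderiv ℝ F x (ee i)| ≤ M') :
    ∫ z, z i * F z ∂gam = ∫ z, fderiv ℝ F z (ee i) ∂gam := by
  have hc : Continuous fun x => fderiv ℝ F x (ee i) := (hF.continuous_fderiv (by norm_num)).clm_apply continuous_const
  have i1 : Integrable (fun z : E3 => z i * F z) gam :=
    (gam_coord_integrable i).mul_bdd hF.continuous.aestronglyMeasurable (Eventually.of_forall fun z => hM z)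
  have i2 : Integrable (fun z => fderiv ℝ F z (ee i)) gam :=
    Integrable.of_bound hc.aestronglyMeasurable M' (Eventually.of_forall fun z => hM' z)
  have i3 : Integrable F gam :=
    Integrable.of_bound hF.continuous.aestronglyMeasurable M (Eventually.of_forall fun z => hM z)
  rw [integral_gam, integral_gam, integral_mul_fderiv_eq_neg_fderiv_mul_of_integrable, ← integral_neg]
  · congr 1; ext z; rw [dens_fderiv]; ring
  · refine (integrable_gam.1 i1).neg.congr (Eventually.of_forall fun z => ?_)
    simp only [Pi.neg_apply]; rw [dens_fderiv]; ring
  · exact integrable_gam.1 i2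
  · exact integrable_gam.1 i3
  · intro x _; exact dens_diff x
  · intro x _; exact hF.differentiable (by norm_num) x

end HeatCZ

namespace HeatCZ
open ProbabilityTheory Filter Topology Set
open scoped SchwartzMap LineDeriv Laplacian RealInnerProductSpace

/-- bounded continuous -/
def BC (f : E3 → ℝ) : Prop := Continuous f ∧ ∃ M, ∀ x, |f x| ≤ M

lemma BC.schwartz (f : 𝓢(E3, ℝ)) : BC f := by
  refine ⟨f.continuous, ?_⟩
  obtain ⟨C, hC⟩ := f.decay 0 0
  exact ⟨C, fun x => by simpa using hC.2 x⟩

lemma BC.integrable {f : E3 → ℝ} (hf : BC f) (t : ℝ) (x : E3) :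
    Integrable (fun z => f (x + √t • z)) gam := by
  obtain ⟨M, hM⟩ := hf.2
  exact Integrable.of_bound (hf.1.comp (by fun_prop)).aestronglyMeasurable M (Eventually.of_forall fun z => hM _)

lemma BC.cont {f : E3 → ℝ} (hf : BC f) : Continuous (fun p : ℝ × E3 => P p.1 f p.2) := by
  obtain ⟨M, hM⟩ := hf.2
  unfold P
  refine continuous_of_dominated (bound := fun _ => M) ?_ ?_ ?_ ?_
  · intro p; exact (hf.1.comp (by fun_prop)).aestronglyMeasurable
  · intro p; exact Eventually.of_forall fun z => hM _
  · exact integrable_const _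
  · refine Eventually.of_forall fun z => hf.1.comp (by fun_prop)

lemma BC.bound {f : E3 → ℝ} {M : ℝ} (hM : ∀ x, |f x| ≤ M) (t : ℝ) (x : E3) : |P t f x| ≤ M := by
  unfold P
  have := norm_integral_le_of_norm_le_const (μ := gam) (f := fun z => f (x + √t • z)) (C := M) (Eventually.of_forall fun z => hM _)
  simpa using this

lemma BC.P {f : E3 → ℝ} (hf : BC f) (t : ℝ) : BC (P t f) := by
  refine ⟨hf.cont.comp (by fun_prop : Continuous fun x : E3 => (t, x)), ?_⟩
  obtain ⟨M, hM⟩ := hf.2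
  exact ⟨M, BC.bound hM t⟩

lemma P_zero (f : E3 → ℝ) (x : E3) : HeatCZ.P 0 f x = f x := by simp [HeatCZ.P]

lemma P_semi {f : E3 → ℝ} (hf : BC f) {s t : ℝ} (hs : 0 ≤ s) (ht : 0 ≤ t) (x : E3) :
    HeatCZ.P s (HeatCZ.P t f) x = HeatCZ.P (s + t) f x := by
  obtain ⟨M, hM⟩ := hf.2
  unfold HeatCZ.P
  rw [← gsemi (F := fun y => f (x + y)) (hf.1.comp (by fun_prop)) (fun y => hM _) s t hs ht]
  simp_rw [add_assoc]

/-- partial derivative of a Schwartz function -/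
def dd (i : Fin 3) (f : 𝓢(E3, ℝ)) : 𝓢(E3, ℝ) := ∂_{ee i} f

lemma dd_apply (i : Fin 3) (f : 𝓢(E3, ℝ)) (x : E3) : dd i f x = fderiv ℝ f x (ee i) := rfl

lemma P_hasFDerivAt (f : 𝓢(E3, ℝ)) (t : ℝ) (x : E3) :
    HasFDerivAt (P t f) (∫ z, fderiv ℝ f (x + √t • z) ∂gam) x := by
  have hc : Continuous (fderiv ℝ f) := (f.smooth 1).continuous_fderiv (by norm_num)
  obtain ⟨C, hC⟩ := (SchwartzMap.fderivCLM ℝ E3 ℝ f).decay 0 0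
  have hC2 : ∀ y, ‖fderiv ℝ f y‖ ≤ C := fun y => by simpa using hC.2 y
  refine hasFDerivAt_integral_of_dominated_of_fderiv_le (F := fun x z => f (x + √t • z))
    (F' := fun x z => fderiv ℝ f (x + √t • z)) (bound := fun _ => C) (s := univ) univ_mem ?_ ?_ ?_ ?_ ?_ ?_
  · exact Eventually.of_forall fun y => (f.continuous.comp (by fun_prop)).aestronglyMeasurable
  · exact (BC.schwartz f).integrable t x
  · exact (hc.comp (by fun_prop)).aestronglyMeasurable
  · exact Eventually.of_forall fun z y _ => hC2 _
  · exact integrable_const _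
  · exact Eventually.of_forall fun z y _ => by
      have := (f.hasFDerivAt (y + √t • z)).comp y ((hasFDerivAt_id y).add_const (√t • z))
      rw [ContinuousLinearMap.comp_id] at this
      exact this

lemma P_fderiv (f : 𝓢(E3, ℝ)) (t : ℝ) (x : E3) (i : Fin 3) :
    fderiv ℝ (P t f) x (ee i) = P t (dd i f) x := by
  have hc : Continuous (fderiv ℝ f) := (f.smooth 1).continuous_fderiv (by norm_num)
  obtain ⟨C, hC⟩ := (SchwartzMap.fderivCLM ℝ E3 ℝ f).decay 0 0
  have hC2 : ∀ y, ‖fderiv ℝ f y‖ ≤ C := fun y => by simpa using hC.2 y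
  rw [(P_hasFDerivAt f t x).fderiv, ContinuousLinearMap.integral_apply]
  · rfl
  · exact Integrable.of_bound (hc.comp (by fun_prop)).aestronglyMeasurable C (Eventually.of_forall fun z => hC2 _)

/-- Laplacian as sum -/
def lap (f : 𝓢(E3, ℝ)) : 𝓢(E3, ℝ) := ∑ i, dd i (dd i f)

lemma scaled_ibp (f : 𝓢(E3, ℝ)) (t : ℝ) (x : E3) (i : Fin 3) :
    ∫ z, z i * f (x + √t • z) ∂gam = √t * P t (dd i f) x := by
  have hd : ∀ z : E3, HasFDerivAt (fun z => f (x + √t • z)) ((fderiv ℝ f (x + √t • z)).comp (√t • ContinuousLinearMap.id ℝ E3)) z := by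
    intro z
    have := ((hasFDerivAt_id (𝕜 := ℝ) z).const_smul (√t)).const_add x
    exact (f.hasFDerivAt (x + √t • z)).comp z this
  have hd2 : ∀ z, fderiv ℝ (fun z => f (x + √t • z)) z (ee i) = √t * (dd i f) (x + √t • z) := by
    intro z
    rw [(hd z).fderiv, dd_apply]
    simp
  obtain ⟨M, hM⟩ := (BC.schwartz f).2
  obtain ⟨M', hM'⟩ := (BC.schwartz (dd i f)).2
  rw [gibp (M := M) (M' := √t * M')]
  · simp_rw [hd2]; rw [integral_const_mul]; rfl
  · exact (f.smooth 1).comp (by fun_prop)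
  · exact fun z => hM _
  · intro z; rw [hd2, abs_mul, abs_of_nonneg (Real.sqrt_nonneg t)]
    exact mul_le_mul_of_nonneg_left (hM' _) (Real.sqrt_nonneg t)

lemma decay (f : 𝓢(E3, ℝ)) (i : Fin 3) : ∃ C, ∀ t > 0, ∀ x, |P t (dd i f) x| ≤ C / √t := by
  obtain ⟨M, hM⟩ := (BC.schwartz f).2
  refine ⟨∫ z : E3, ‖z‖ * M ∂gam, fun t ht x => ?_⟩
  have hs : 0 < √t := Real.sqrt_pos.2 ht
  rw [le_div_iff₀ hs]
  have h := scaled_ibp f t x i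
  have : |P t (dd i f) x| * √t = |∫ z, z i * f (x + √t • z) ∂gam| := by
    rw [h, abs_mul, abs_of_pos hs, mul_comm]
  rw [this]
  rw [← Real.norm_eq_abs]
  refine norm_integral_le_of_norm_le (gam_norm_integrable.mul_const M) (Eventually.of_forall fun z => ?_)
  rw [norm_mul]
  exact mul_le_mul (coord_le z i) (hM _) (norm_nonneg _) (norm_nonneg _)

lemma sum_coord (L : E3 →L[ℝ] ℝ) (z : E3) : L z = ∑ i, z i * L (ee i) := by
  have : z = ∑ i, z i • ee i := by
    ext j; simp [ee, Finset.sum_apply, Pi.single_apply]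
  conv_lhs => rw [this]
  simp

lemma P_deriv (f : 𝓢(E3, ℝ)) {t : ℝ} (ht : 0 < t) (x : E3) :
    HasDerivAt (fun t => P t f x) (1/2 * P t (lap f) x) t := by
  obtain ⟨C, hC⟩ := (SchwartzMap.fderivCLM ℝ E3 ℝ f).decay 0 0
  have hC2 : ∀ y, ‖fderiv ℝ f y‖ ≤ C := fun y => by simpa using hC.2 y
  have hc : Continuous (fderiv ℝ f) := (f.smooth 1).continuous_fderiv (by norm_num)
  have key : HasDerivAt (fun r => ∫ z, f (x + r • z) ∂gam) (∫ z, fderiv ℝ f (x + √t • z) z ∂gam) (√t) := by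
    refine (hasDerivAt_integral_of_dominated_loc_of_deriv_le (F := fun r z => f (x + r • z))
      (F' := fun r z => fderiv ℝ f (x + r • z) z) (bound := fun z => C * ‖z‖) (s := univ) univ_mem ?_ ?_ ?_ ?_ ?_ ?_).2
    · exact Eventually.of_forall fun y => (f.continuous.comp (by fun_prop)).aestronglyMeasurable
    · exact (BC.schwartz f).integrable t x
    · exact ((hc.comp (by fun_prop)).clm_apply continuous_id).aestronglyMeasurable
    · exact Eventually.of_forall fun z r _ => ((fderiv ℝ f (x + r • z)).le_opNorm z).trans
        (mul_le_mul_of_nonneg_right (hC2 _) (norm_nonneg _))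
    · exact gam_norm_integrable.const_mul C
    · refine Eventually.of_forall fun z r _ => ?_
      have h1 : HasDerivAt (fun r : ℝ => x + r • z) z r := by
        simpa using ((hasDerivAt_id r).smul_const z).const_add x
      exact (f.hasFDerivAt (x + r • z)).comp_hasDerivAt r h1
  have h2 := key.comp t (Real.hasDerivAt_sqrt ht.ne')
  have hs : 0 < √t := Real.sqrt_pos.2 ht
  have e : ∫ z, fderiv ℝ f (x + √t • z) z ∂gam = √t * P t (lap f) x := by
    have e1 : ∀ z : E3, fderiv ℝ f (x + √t • z) z = ∑ i, z i * (dd i f) (x + √t • z) :=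
      fun z => sum_coord _ z
    simp_rw [e1]
    rw [integral_finsetSum]
    · simp_rw [scaled_ibp]
      rw [← Finset.mul_sum]
      congr 1
      unfold P lap
      rw [← integral_finsetSum]
      · simp
      · intro i _; exact (BC.schwartz _).integrable t x
    · intro i _
      obtain ⟨M, hM⟩ := (BC.schwartz (dd i f)).2
      exact (gam_coord_integrable i).mul_bdd ((dd i f).continuous.comp (by fun_prop)).aestronglyMeasurable
        (Eventually.of_forall fun z => hM _)
  rw [e] at h2
  refine (h2.congr_deriv ?_ : HasDerivAt (fun t => P t f x) (1/2 * P t (lap f) x) t)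
  field_simp

lemma neg_gam : gam.map (fun z => -z) = gam := by
  have : IsProbabilityMeasure (gam.map (fun z => -z)) :=
    Measure.isProbabilityMeasure_map (by fun_prop)
  exact stdGaussian_map (LinearIsometryEquiv.neg ℝ (E := E3))

lemma P_symm {f g : E3 → ℝ} (hf : BC f) (hg : BC g) (gi : Integrable g) (t : ℝ) :
    ∫ x, P t f x * g x = ∫ x, f x * P t g x := by
  obtain ⟨M, hM⟩ := hf.2
  have e1 : ∀ x, P t f x * g x = ∫ z, f (x + √t • z) * g x ∂gam := fun x => by
    rw [integral_mul_const]; rfl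
  have e2 : ∀ x, f x * P t g x = ∫ z, f x * g (x - √t • z) ∂gam := fun x => by
    rw [integral_const_mul]
    congr 1
    unfold P
    conv_lhs => rw [← neg_gam]
    have hm : Continuous fun z : E3 => g (x + √t • z) := hg.1.comp (by fun_prop)
    rw [integral_map (by fun_prop) hm.aestronglyMeasurable]
    congr 1; ext z; simp [sub_eq_add_neg]
  simp_rw [e1, e2]
  have step : ∀ z : E3, ∫ x, f (x + √t • z) * g x = ∫ x, f x * g (x - √t • z) := fun z => by
    rw [← integral_add_right_eq_self (fun x => f x * g (x - √t • z)) (√t • z)]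
    simp
  rw [integral_integral_swap, integral_congr_ae (Eventually.of_forall step), integral_integral_swap]
  rotate_left
  · have h1 : Integrable (fun p : E3 × E3 => g p.1) (volume.prod gam) := gi.comp_fst _
    exact h1.bdd_mul (hf.1.comp (by fun_prop : Continuous fun p : E3 × E3 => p.1 + √t • p.2)).aestronglyMeasurable (Eventually.of_forall fun z => hM _)
  · have h1 : Integrable (fun p : E3 × E3 => g (p.1 - √t • p.2)) (volume.prod gam) := by
      have hm : Continuous (fun p : E3 × E3 => g (p.1 - √t • p.2)) := hg.1.comp (by fun_prop)
      rw [integrable_prod_iff' hm.aestronglyMeasurable]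
      refine ⟨Eventually.of_forall fun z => gi.comp_sub_right (√t • z), ?_⟩
      have : ∀ z : E3, ∫ x, ‖g (x - √t • z)‖ = ∫ x, ‖g x‖ := fun z => integral_sub_right_eq_self (fun x => ‖g x‖) _
      simp_rw [this]
      exact integrable_const _
    have h2 := h1.bdd_mul (f := fun p : E3 × E3 => f p.1) (hf.1.comp continuous_fst).aestronglyMeasurable (Eventually.of_forall fun z => hM _)
    exact h2.swap

lemma P_integrable {g : E3 → ℝ} (hg : BC g) (gi : Integrable g) (t : ℝ) : Integrable (P t g) := by
  have h1 : Integrable (fun p : E3 × E3 => g (p.1 + √t • p.2)) (volume.prod gam) := by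
    have hm : Continuous (fun p : E3 × E3 => g (p.1 + √t • p.2)) := hg.1.comp (by fun_prop)
    rw [integrable_prod_iff' hm.aestronglyMeasurable]
    refine ⟨Eventually.of_forall fun z => gi.comp_add_right (√t • z), ?_⟩
    have : ∀ z : E3, ∫ x, ‖g (x + √t • z)‖ = ∫ x, ‖g x‖ := fun z => integral_add_right_eq_self (fun x => ‖g x‖) _
    simp_rw [this]
    exact integrable_const _
  exact h1.integral_prod_left

end HeatCZ

namespace HeatCZ
open ProbabilityTheory Filter Topology Set
open scoped SchwartzMap LineDeriv Laplacian RealInnerProductSpace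

lemma dd_comm (i j : Fin 3) (f : 𝓢(E3, ℝ)) : dd i (dd j f) = dd j (dd i f) := by
  ext x
  have hd : ∀ k : Fin 3, ∀ v, fderiv ℝ (dd k f) x v = fderiv ℝ (fderiv ℝ f) x v (ee k) := by
    intro k v
    have h1 : DifferentiableAt ℝ (fderiv ℝ f) x :=
      ((f.smooth 2).fderiv_right (m := 1) (by norm_num)).differentiable (by norm_num) x
    have h2 : HasFDerivAt (fun y => fderiv ℝ f y (ee k)) ((ContinuousLinearMap.apply ℝ ℝ (ee k)).comp (fderiv ℝ (fderiv ℝ f) x)) x :=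
      (ContinuousLinearMap.hasFDerivAt (ContinuousLinearMap.apply ℝ ℝ (ee k))).comp x h1.hasFDerivAt
    have h3 : (dd k f : E3 → ℝ) = fun y => fderiv ℝ f y (ee k) := rfl
    rw [h3, h2.fderiv]; simp
  have hs : IsSymmSndFDerivAt ℝ f x := (f.smooth 2).contDiffAt.isSymmSndFDerivAt (by simp)
  rw [dd_apply, dd_apply, hd, hd]
  exact hs (ee i) (ee j)

lemma lap_dd (i : Fin 3) (f : 𝓢(E3, ℝ)) : lap (dd i f) = dd i (lap f) := by
  have : dd i (lap f) = ∑ j, dd i (dd j (dd j f)) := by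
    unfold lap
    exact LineDeriv.lineDerivOp_sum _ _ _
  rw [this, lap]
  refine Finset.sum_congr rfl fun j _ => ?_
  rw [dd_comm j i f, dd_comm j i]

lemma P_diff (f : 𝓢(E3, ℝ)) (t : ℝ) : Differentiable ℝ (P t f) :=
  fun x => (P_hasFDerivAt f t x).differentiableAt

lemma P_int (f : 𝓢(E3, ℝ)) (t : ℝ) : Integrable (P t f) := P_integrable (BC.schwartz f) f.integrable t

lemma P_mul_int (f g : 𝓢(E3, ℝ)) (t : ℝ) : Integrable (fun x => P t f x * P t g x) := by
  obtain ⟨M, hM⟩ := ((BC.schwartz f).P t).2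
  exact (P_int g t).bdd_mul ((BC.schwartz f).P t).1.aestronglyMeasurable (Eventually.of_forall hM)

lemma A_eq (w g : 𝓢(E3, ℝ)) (i : Fin 3) {t : ℝ} (ht : 0 ≤ t) :
    ∫ x, P (2 * t) (lap (dd i w)) x * g x = - ∫ x, P t (lap w) x * P t (dd i g) x := by
  have e : ∀ x, P (2 * t) (lap (dd i w)) x = P t (P t (lap (dd i w))) x := fun x => by
    rw [P_semi (BC.schwartz _) ht ht, two_mul]
  simp_rw [e]
  rw [P_symm ((BC.schwartz _).P t) (BC.schwartz g) g.integrable, lap_dd]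
  simp_rw [← P_fderiv]
  rw [integral_mul_fderiv_eq_neg_fderiv_mul_of_integrable, neg_neg]
  · simp_rw [P_fderiv]; exact P_mul_int _ _ _
  · simp_rw [P_fderiv]; exact P_mul_int _ _ _
  · exact P_mul_int _ _ _
  · intro x _; exact P_diff _ _ x
  · intro x _; exact P_diff _ _ x

lemma ftc (f : 𝓢(E3, ℝ)) {T : ℝ} (hT : 0 ≤ T) (x : E3) :
    ∫ t in (0:ℝ)..T, P (2 * t) (lap f) x = P (2 * T) f x - f x := by
  have h0 : f x = P (2 * 0) f x := by rw [mul_zero, P_zero]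
  rw [h0]
  refine intervalIntegral.integral_eq_sub_of_hasDerivAt_of_le hT (f := fun t => P (2 * t) f x) ?_ ?_ ?_
  · exact ((BC.schwartz f).cont.comp (by fun_prop : Continuous fun t : ℝ => ((2 * t, x) : ℝ × E3))).continuousOn
  · intro t ht
    have := (P_deriv f (t := 2 * t) (by linarith [ht.1]) x).comp t ((hasDerivAt_id t).const_mul 2)
    refine this.congr_deriv ?_
    ring
  · exact ((BC.schwartz (lap f)).cont.comp (by fun_prop : Continuous fun t : ℝ => ((2 * t, x) : ℝ × E3))).intervalIntegrable _ _

lemma id_T (w g : 𝓢(E3, ℝ)) (i : Fin 3) {T : ℝ} (hT : 0 ≤ T) :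
    ∫ x, dd i w x * g x = (∫ x, P (2 * T) (dd i w) x * g x)
      + ∫ t in (0:ℝ)..T, ∫ x, P t (lap w) x * P t (dd i g) x := by
  obtain ⟨M, hM⟩ := (BC.schwartz (lap (dd i w))).2
  have hGint : Integrable (fun p : ℝ × E3 => P (2 * p.1) (lap (dd i w)) p.2 * g p.2) ((volume.restrict (Ioc 0 T)).prod volume) := by
    have h1 : Integrable (fun p : ℝ × E3 => g p.2) ((volume.restrict (Ioc 0 T)).prod volume) := g.integrable.comp_snd _
    refine h1.bdd_mul (c := M) (f := fun p : ℝ × E3 => P (2 * p.1) (lap (dd i w)) p.2) ?_ ?_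
    · exact ((BC.schwartz (lap (dd i w))).cont.comp (by fun_prop : Continuous fun p : ℝ × E3 => (2 * p.1, p.2))).aestronglyMeasurable
    · exact Eventually.of_forall fun p => BC.bound hM _ _
  have h1 : ∫ t in (0:ℝ)..T, ∫ x, P t (lap w) x * P t (dd i g) x
      = - ∫ t in (0:ℝ)..T, ∫ x, P (2 * t) (lap (dd i w)) x * g x := by
    rw [← intervalIntegral.integral_neg]
    refine intervalIntegral.integral_congr fun t ht => ?_
    rw [uIcc_of_le hT] at ht
    rw [A_eq w g i ht.1, neg_neg]
  rw [h1, intervalIntegral.integral_of_le hT, integral_integral_swap hGint]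
  have h2 : ∀ x, ∫ t in Ioc 0 T, P (2 * t) (lap (dd i w)) x * g x = P (2 * T) (dd i w) x * g x - dd i w x * g x := by
    intro x
    rw [integral_mul_const, ← intervalIntegral.integral_of_le hT, ftc _ hT]
    ring
  simp_rw [h2]
  have i1 : Integrable fun x => P (2 * T) (dd i w) x * g x := by
    obtain ⟨M, hM⟩ := ((BC.schwartz (dd i w)).P (2 * T)).2
    exact g.integrable.bdd_mul ((BC.schwartz _).P _).1.aestronglyMeasurable (Eventually.of_forall hM)
  have i2 : Integrable fun x => dd i w x * g x := by
    obtain ⟨M, hM⟩ := (BC.schwartz (dd i w)).2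
    exact g.integrable.bdd_mul (dd i w).continuous.aestronglyMeasurable (Eventually.of_forall hM)
  rw [integral_sub i1 i2]
  ring

lemma dual_bound (w g : 𝓢(E3, ℝ)) (i : Fin 3) (R : ENNReal)
    (hR : ∀ T > 0, ∫⁻ t in Ioc (0:ℝ) T, ∫⁻ x, ENNReal.ofReal |P t (lap w) x * P t (dd i g) x| ≤ R) :
    ENNReal.ofReal |∫ x, dd i w x * g x| ≤ R := by
  obtain ⟨C, hC⟩ := decay w i
  have key : ∀ T > 0, ENNReal.ofReal |∫ x, dd i w x * g x| ≤ ENNReal.ofReal (C / √(2 * T) * ∫ x, ‖g x‖) + R := by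
    intro T hT
    rw [id_T w g i hT.le]
    refine (ENNReal.ofReal_le_ofReal (abs_add_le _ _)).trans ?_
    rw [ENNReal.ofReal_add (abs_nonneg _) (abs_nonneg _)]
    refine add_le_add (ENNReal.ofReal_le_ofReal ?_) ?_
    · rw [← integral_const_mul, ← Real.norm_eq_abs]
      refine norm_integral_le_of_norm_le (g.integrable.norm.const_mul _) (Eventually.of_forall fun x => ?_)
      rw [norm_mul]
      exact mul_le_mul_of_nonneg_right (hC _ (by positivity) x) (norm_nonneg _)
    · rw [intervalIntegral.integral_of_le hT.le, ← Real.norm_eq_abs, ofReal_norm]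
      refine (enorm_integral_le_lintegral_enorm _).trans ?_
      refine le_trans ?_ (hR T hT)
      refine lintegral_mono fun t => ?_
      refine (enorm_integral_le_lintegral_enorm _).trans ?_
      refine lintegral_mono fun x => ?_
      rw [← Real.norm_eq_abs, ofReal_norm]
  have lim : Tendsto (fun T : ℝ => ENNReal.ofReal (C / √(2 * T) * ∫ x, ‖g x‖) + R) atTop (𝓝 (0 + R)) := by
    refine Tendsto.add ?_ tendsto_const_nhds
    rw [← ENNReal.ofReal_zero]
    refine ENNReal.tendsto_ofReal ?_
    rw [← zero_mul (∫ x, ‖g x‖)]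
    refine Tendsto.mul_const _ (Tendsto.div_atTop tendsto_const_nhds ?_)
    exact Real.tendsto_sqrt_atTop.comp (tendsto_id.const_mul_atTop two_pos)
  rw [zero_add] at lim
  refine ge_of_tendsto lim ?_
  filter_upwards [eventually_gt_atTop 0] with T hT using key T hT

end HeatCZ

namespace HeatCZ
open ProbabilityTheory Filter Topology Set
open scoped SchwartzMap LineDeriv Laplacian RealInnerProductSpace

/-- constant -/
def Kc (k r : ℝ) : ℝ := (4 * k ^ 2 + |k * (k - 1)|) / (r * (r - 1))

lemma Kc_nonneg {k r : ℝ} (hr : 1 < r) : 0 ≤ Kc k r := by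
  unfold Kc
  have : 0 < r - 1 := by linarith
  positivity

/-- Bellman function -/
def Bf (k r x w : ℝ) : ℝ := x ^ 2 * w ^ k + Kc k r * w ^ r

lemma Bf_nonneg {k r x w : ℝ} (hr : 1 < r) (hw : 0 < w) : 0 ≤ Bf k r x w := by
  have := Kc_nonneg (k := k) hr
  unfold Bf; positivity

lemma sq_mul_le {α k r x w : ℝ} (hk : k = r - 2 * α) (hw : 0 < w) (hx : |x| ≤ w ^ α) :
    x ^ 2 * w ^ k ≤ w ^ r := by
  have h1 : x ^ 2 ≤ (w ^ α) ^ 2 := by rw [← sq_abs]; exact pow_le_pow_left₀ (abs_nonneg _) hx 2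
  calc x ^ 2 * w ^ k ≤ (w ^ α) ^ 2 * w ^ k := mul_le_mul_of_nonneg_right h1 (by positivity)
    _ = w ^ r := by
      rw [← Real.rpow_natCast, ← Real.rpow_mul hw.le, ← Real.rpow_add hw]
      congr 1; rw [hk]; push_cast; ring

lemma Bf_le {α k r x w : ℝ} (hk : k = r - 2 * α) (hw : 0 < w) (hx : |x| ≤ w ^ α) :
    Bf k r x w ≤ (1 + Kc k r) * w ^ r := by
  have := sq_mul_le hk hw hx
  unfold Bf; linarith

lemma Bf_second {k r p q v a b X m : ℝ} (hr : 1 < r) (hp : 0 ≤ p) (hq : X ^ 2 * p ≤ q) (hm : m ≤ p) :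
    0 ≤ 2 * a ^ 2 * p + 4 * k * a * b * X * (p * v) + k * (k - 1) * b ^ 2 * X ^ 2 * (p * v ^ 2)
      + Kc k r * r * (r - 1) * b ^ 2 * (q * v ^ 2) - m * a ^ 2 := by
  have hr' : 0 < r - 1 := by linarith
  have hK : Kc k r * r * (r - 1) = 4 * k ^ 2 + |k * (k - 1)| := by
    unfold Kc; field_simp
  rw [hK]
  have hXp : 0 ≤ X ^ 2 * p := by positivity
  have h1 : 0 ≤ (4 * k ^ 2 + |k * (k - 1)|) * q - 4 * k ^ 2 * (X ^ 2 * p) + k * (k - 1) * (X ^ 2 * p) := by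
    have h2 : -|k * (k - 1)| ≤ k * (k - 1) := neg_abs_le _
    have h3 := abs_nonneg (k * (k - 1))
    have h4 : 0 ≤ (4 * k ^ 2 + |k * (k - 1)|) * (q - X ^ 2 * p) := mul_nonneg (by positivity) (by linarith)
    have h5 : 0 ≤ (k * (k - 1) + |k * (k - 1)|) * (X ^ 2 * p) := mul_nonneg (by linarith) hXp
    linarith
  have h2 := mul_nonneg h1 (sq_nonneg (b * v))
  have h3 := mul_nonneg hp (sq_nonneg (a + 2 * k * b * X * v))
  have h4 := mul_nonneg (sub_nonneg.2 hm) (sq_nonneg a)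
  nlinarith

lemma Bf_taylor {α k r x w X H : ℝ} (hα0 : 0 < α) (hα1 : α < 1) (hr : 1 < r) (hk : k = r - 2 * α)
    (hw : 0 < w) (hH : 0 < H) (hx : |x| ≤ w ^ α) (hX : |X| ≤ H ^ α) :
    Bf k r x w + 2 * x * w ^ k * (X - x) + (k * x ^ 2 * w ^ (k - 1) + Kc k r * r * w ^ (r - 1)) * (H - w)
      + 1 / 2 * min (H ^ k) (w ^ k) * (X - x) ^ 2 ≤ Bf k r X H := by
  set a := X - x with ha
  set b := H - w with hb
  set m := min (H ^ k) (w ^ k) with hm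
  let f : ℝ → ℝ := fun θ => Bf k r (x + θ * a) (w + θ * b) - 1 / 2 * m * a ^ 2 * θ ^ 2
  let f' : ℝ → ℝ := fun θ => 2 * a * (x + θ * a) * (w + θ * b) ^ k
    + k * b * (x + θ * a) ^ 2 * (w + θ * b) ^ (k - 1) + Kc k r * r * b * (w + θ * b) ^ (r - 1) - m * a ^ 2 * θ
  let f'' : ℝ → ℝ := fun θ => 2 * a ^ 2 * (w + θ * b) ^ k + 4 * k * a * b * (x + θ * a) * (w + θ * b) ^ (k - 1)
    + k * (k - 1) * b ^ 2 * (x + θ * a) ^ 2 * (w + θ * b) ^ (k - 2)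
    + Kc k r * r * (r - 1) * b ^ 2 * (w + θ * b) ^ (r - 2) - m * a ^ 2
  have Wpos : ∀ θ ∈ Icc (0:ℝ) 1, 0 < w + θ * b := by
    intro θ hθ
    have : w + θ * b = (1 - θ) * w + θ * H := by rw [hb]; ring
    rw [this]
    rcases eq_or_lt_of_le hθ.1 with h | h
    · rw [← h]; simpa using hw
    · have := mul_nonneg (sub_nonneg.2 hθ.2) hw.le
      have := mul_pos h hH
      linarith
  have dX : ∀ θ, HasDerivAt (fun θ => x + θ * a) a θ := fun θ => by
    simpa using ((hasDerivAt_id θ).mul_const a).const_add x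
  have dW : ∀ θ, HasDerivAt (fun θ => w + θ * b) b θ := fun θ => by
    simpa using ((hasDerivAt_id θ).mul_const b).const_add w
  have dWp : ∀ s : ℝ, ∀ θ ∈ Icc (0:ℝ) 1, HasDerivAt (fun θ => (w + θ * b) ^ s) (b * s * (w + θ * b) ^ (s - 1)) θ :=
    fun s θ hθ => (dW θ).rpow_const (Or.inl (Wpos θ hθ).ne')
  have d1 : ∀ θ ∈ Icc (0:ℝ) 1, HasDerivAt f (f' θ) θ := by
    intro θ hθ
    have h := ((((dX θ).pow 2).mul (dWp k θ hθ)).add ((dWp r θ hθ).const_mul (Kc k r))).sub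
      ((hasDerivAt_pow 2 θ).const_mul (1 / 2 * m * a ^ 2))
    refine h.congr_deriv ?_
    simp only [f', Pi.pow_apply]
    push_cast
    ring
  have d2 : ∀ θ ∈ Icc (0:ℝ) 1, HasDerivAt f' (f'' θ) θ := by
    intro θ hθ
    have h := (((((dX θ).const_mul (2 * a)).mul (dWp k θ hθ)).add
      ((((dX θ).pow 2).const_mul (k * b)).mul (dWp (k - 1) θ hθ))).add
      ((dWp (r - 1) θ hθ).const_mul (Kc k r * r * b))).sub
      ((hasDerivAt_id θ).const_mul (m * a ^ 2))
    refine h.congr_deriv ?_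
    simp only [f'', Pi.pow_apply]
    rw [show k - 1 - 1 = k - 2 by ring, show r - 1 - 1 = r - 2 by ring]
    push_cast
    ring
  have d2pos : ∀ θ ∈ Icc (0:ℝ) 1, 0 ≤ f'' θ := by
    intro θ hθ
    have hW := Wpos θ hθ
    set W := w + θ * b with hWdef
    have hcomb : W = (1 - θ) * w + θ * H := by rw [hWdef, hb]; ring
    have hXb : |x + θ * a| ≤ W ^ α := by
      have h1 : x + θ * a = (1 - θ) * x + θ * X := by rw [ha]; ring
      have hc := (Real.concaveOn_rpow hα0.le hα1.le).2 (mem_Ici.2 hw.le) (mem_Ici.2 hH.le)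
        (by linarith [hθ.2] : 0 ≤ 1 - θ) hθ.1 (by ring)
      simp only [smul_eq_mul] at hc
      rw [h1, hcomb]
      refine le_trans ?_ hc
      refine (abs_add_le _ _).trans ?_
      rw [abs_mul, abs_mul, abs_of_nonneg hθ.1, abs_of_nonneg (by linarith [hθ.2] : (0:ℝ) ≤ 1 - θ)]
      exact add_le_add (mul_le_mul_of_nonneg_left hx (by linarith [hθ.2])) (mul_le_mul_of_nonneg_left hX hθ.1)
    have hq := sq_mul_le hk hW hXb
    have hmW : m ≤ W ^ k := by
      have hbd : min w H ≤ W ∧ W ≤ max w H := by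
        rw [hcomb]
        constructor
        · have h1 := mul_le_mul_of_nonneg_left (min_le_left w H) (sub_nonneg.2 hθ.2)
          have h2 := mul_le_mul_of_nonneg_left (min_le_right w H) hθ.1
          linarith
        · have h1 := mul_le_mul_of_nonneg_left (le_max_left w H) (sub_nonneg.2 hθ.2)
          have h2 := mul_le_mul_of_nonneg_left (le_max_right w H) hθ.1
          linarith
      rcases le_total 0 k with hk0 | hk0
      · have := Real.rpow_le_rpow (lt_min hw hH).le hbd.1 hk0
        refine le_trans ?_ this
        rcases min_choice w H with h | h <;> rw [h]
        · exact min_le_right _ _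
        · exact min_le_left _ _
      · have := Real.rpow_le_rpow_of_nonpos hW hbd.2 hk0
        refine le_trans ?_ this
        rcases max_choice w H with h | h <;> rw [h]
        · exact min_le_right _ _
        · exact min_le_left _ _
    have := Bf_second (k := k) (v := W⁻¹) (a := a) (b := b) hr (Real.rpow_nonneg hW.le k) hq hmW
    have e1 : W ^ (k - 1) = W ^ k * W⁻¹ := by rw [Real.rpow_sub_one hW.ne']; rfl
    have e2 : ∀ s : ℝ, W ^ (s - 2) = W ^ s * W⁻¹ ^ 2 := fun s => by
      rw [Real.rpow_sub hW, Real.rpow_two, inv_pow]; rfl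
    simp only [f'']
    rw [← hWdef, e1, e2, e2]
    exact this
  have hconv : ConvexOn ℝ (Icc (0:ℝ) 1) f := by
    refine convexOn_of_hasDerivWithinAt2_nonneg (convex_Icc 0 1) (f' := f') (f'' := f'') ?_ ?_ ?_ ?_
    · exact fun θ hθ => (d1 θ hθ).continuousAt.continuousWithinAt
    · exact fun θ hθ => (d1 θ (interior_subset hθ)).hasDerivWithinAt
    · exact fun θ hθ => (d2 θ (interior_subset hθ)).hasDerivWithinAt
    · exact fun θ hθ => d2pos θ (interior_subset hθ)
  have hs := hconv.le_slope_of_hasDerivAt (x := 0) (y := 1) (by simp) (by simp) one_pos (d1 0 (by simp))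
  rw [slope_def_field] at hs
  simp only [f, f'] at hs
  have e3 : x + 1 * a = X := by rw [ha]; ring
  have e4 : w + 1 * b = H := by rw [hb]; ring
  rw [e3, e4] at hs
  simp only [zero_mul, add_zero, mul_zero, sub_zero, one_pow, mul_one, div_one, ne_eq, OfNat.ofNat_ne_zero, not_false_eq_true, zero_pow] at hs
  linarith

end HeatCZ

namespace HeatCZ
open ProbabilityTheory Filter Topology Set
open scoped SchwartzMap LineDeriv Laplacian RealInnerProductSpace

lemma W_pos {h : E3 → ℝ} (hh : BC h) (hp : ∀ x, 0 < h x) (t : ℝ) (x : E3) : 0 < P t h x := by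
  unfold P
  rw [integral_pos_iff_support_of_nonneg (fun z => (hp _).le) (hh.integrable t x)]
  have : Function.support (fun z => h (x + √t • z)) = univ := by
    ext z; simp [(hp _).ne']
  rw [this]; simp

lemma u_le {f h : E3 → ℝ} {α : ℝ} (hα0 : 0 < α) (hα1 : α < 1) (hf : BC f) (hh : BC h)
    (hp : ∀ x, 0 < h x) (hfh : ∀ x, |f x| ≤ h x ^ α) (t : ℝ) (x : E3) :
    |P t f x| ≤ P t h x ^ α := by
  have hc : Continuous fun y => h y ^ α := hh.1.rpow_const fun y => Or.inr hα0.le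
  have hb : BC fun y => h y ^ α := by
    obtain ⟨M, hM⟩ := hh.2
    refine ⟨hc, M ^ α, fun y => ?_⟩
    rw [abs_of_nonneg (Real.rpow_nonneg (hp y).le _)]
    exact Real.rpow_le_rpow (hp y).le ((le_abs_self _).trans (hM y)) hα0.le
  calc |P t f x| ≤ ∫ z, |f (x + √t • z)| ∂gam := abs_integral_le_integral_abs
    _ ≤ ∫ z, h (x + √t • z) ^ α ∂gam :=
      integral_mono (hf.integrable t x).abs (hb.integrable t x) fun z => hfh _
    _ ≤ P t h x ^ α := by
      have := (Real.concaveOn_rpow hα0.le hα1.le).le_map_integral (μ := gam) (f := fun z => h (x + √t • z))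
        (Real.continuous_rpow_const hα0.le).continuousOn isClosed_Ici
        (Eventually.of_forall fun z => mem_Ici.2 (hp _).le) (hh.integrable t x) (hb.integrable t x)
      exact this

/-- standing hypotheses -/
structure Hyp (f : 𝓢(E3, ℝ)) (h : E3 → ℝ) (α k r : ℝ) : Prop where
  hα0 : 0 < α
  hα1 : α < 1
  hr : 1 < r
  hk : k = r - 2 * α
  hh : BC h
  hp : ∀ x, 0 < h x
  hfh : ∀ x, |f x| ≤ h x ^ α

/-- Bellman energy density -/
def Bu (f : 𝓢(E3, ℝ)) (h : E3 → ℝ) (k r : ℝ) (t : ℝ) (x : E3) : ℝ := Bf k r (P t f x) (P t h x)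

/-- energy -/
def En (f : 𝓢(E3, ℝ)) (h : E3 → ℝ) (k r : ℝ) (t : ℝ) : ENNReal := ∫⁻ x, ENNReal.ofReal (Bu f h k r t x)

/-- remainder -/
def Rem (f : 𝓢(E3, ℝ)) (h : E3 → ℝ) (k : ℝ) (s t : ℝ) (x z : E3) : ℝ :=
  1 / 2 * min (P t h (x + √s • z) ^ k) (P (t + s) h x ^ k) * (P t f (x + √s • z) - P (t + s) f x) ^ 2

section
variable {f : 𝓢(E3, ℝ)} {h : E3 → ℝ} {α k r : ℝ}

lemma Wk_cont (H : Hyp f h α k r) (s : ℝ) : Continuous fun p : ℝ × E3 => P p.1 h p.2 ^ s :=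
  H.hh.cont.rpow_const fun p => Or.inl (W_pos H.hh H.hp _ _).ne'

lemma Bu_cont (H : Hyp f h α k r) : Continuous fun p : ℝ × E3 => Bu f h k r p.1 p.2 := by
  unfold Bu Bf
  exact (((BC.schwartz f).cont.pow 2).mul (Wk_cont H k)).add (continuous_const.mul (Wk_cont H r))

lemma Bu_nonneg (H : Hyp f h α k r) (t : ℝ) (x : E3) : 0 ≤ Bu f h k r t x :=
  Bf_nonneg H.hr (W_pos H.hh H.hp _ _)

lemma Bu_le (H : Hyp f h α k r) (t : ℝ) (x : E3) : Bu f h k r t x ≤ (1 + Kc k r) * P t h x ^ r :=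
  Bf_le H.hk (W_pos H.hh H.hp _ _) (u_le H.hα0 H.hα1 (BC.schwartz f) H.hh H.hp H.hfh _ _)

lemma Bu_BC (H : Hyp f h α k r) (t : ℝ) : BC (Bu f h k r t) := by
  refine ⟨(Bu_cont H).comp (by fun_prop : Continuous fun x : E3 => (t, x)), ?_⟩
  obtain ⟨M, hM⟩ := (H.hh.P t).2
  refine ⟨(1 + Kc k r) * M ^ r, fun x => ?_⟩
  rw [abs_of_nonneg (Bu_nonneg H t x)]
  refine (Bu_le H t x).trans ?_
  have := Kc_nonneg (k := k) H.hr
  refine mul_le_mul_of_nonneg_left ?_ (by linarith)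
  exact Real.rpow_le_rpow (W_pos H.hh H.hp _ _).le ((le_abs_self _).trans (hM x)) (by linarith [H.hr])

lemma Rem_cont (H : Hyp f h α k r) (s : ℝ) :
    Continuous fun p : ℝ × E3 × E3 => Rem f h k s p.1 p.2.1 p.2.2 := by
  unfold Rem
  have c1 : Continuous fun p : ℝ × E3 × E3 => (p.1, p.2.1 + √s • p.2.2) := by fun_prop
  have c2 : Continuous fun p : ℝ × E3 × E3 => (p.1 + s, p.2.1) := by fun_prop
  exact (continuous_const.mul (((Wk_cont H k).comp c1).min ((Wk_cont H k).comp c2))).mul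
    ((((BC.schwartz f).cont.comp c1).sub ((BC.schwartz f).cont.comp c2)).pow 2)

lemma step_pt (H : Hyp f h α k r) {s t : ℝ} (hs : 0 ≤ s) (ht : 0 ≤ t) (x : E3) :
    ENNReal.ofReal (Bu f h k r (t + s) x) + ∫⁻ z, ENNReal.ofReal (Rem f h k s t x z) ∂gam
      ≤ ∫⁻ z, ENNReal.ofReal (Bu f h k r t (x + √s • z)) ∂gam := by
  set x0 := P (t + s) f x with hx0
  set w0 := P (t + s) h x with hw0
  have iG := (Bu_BC H t).integrable s x
  have iX := ((BC.schwartz f).P t).integrable s x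
  have iH := (H.hh.P t).integrable s x
  have eX : ∫ z, P t f (x + √s • z) ∂gam = x0 := by
    rw [hx0, add_comm, ← P_semi (BC.schwartz f) hs ht]; rfl
  have eH : ∫ z, P t h (x + √s • z) ∂gam = w0 := by
    rw [hw0, add_comm, ← P_semi H.hh hs ht]; rfl
  let c1 := 2 * x0 * w0 ^ k
  let c2 := k * x0 ^ 2 * w0 ^ (k - 1) + Kc k r * r * w0 ^ (r - 1)
  let L : E3 → ℝ := fun z => Bu f h k r (t + s) x + c1 * (P t f (x + √s • z) - x0) + c2 * (P t h (x + √s • z) - w0)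
  have i1 : Integrable (fun z => c1 * (P t f (x + √s • z) - x0)) gam := (iX.sub (integrable_const _)).const_mul _
  have i2 : Integrable (fun z => c2 * (P t h (x + √s • z) - w0)) gam := (iH.sub (integrable_const _)).const_mul _
  have iL : Integrable L gam := ((integrable_const _).add i1).add i2
  have eL : ∫ z, L z ∂gam = Bu f h k r (t + s) x := by
    have j1 : Integrable (fun z => Bu f h k r (t + s) x + c1 * (P t f (x + √s • z) - x0)) gam := (integrable_const _).add i1
    have : ∫ z, L z ∂gam = ∫ z, (Bu f h k r (t + s) x + c1 * (P t f (x + √s • z) - x0)) + c2 * (P t h (x + √s • z) - w0) ∂gam := rfl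
    rw [this, integral_add j1 i2, integral_add (integrable_const _) i1, integral_const_mul, integral_const_mul,
      integral_sub iX (integrable_const _), integral_sub iH (integrable_const _), eX, eH]
    simp
  have hle : ∀ z, Rem f h k s t x z ≤ Bu f h k r t (x + √s • z) - L z := by
    intro z
    have := Bf_taylor H.hα0 H.hα1 H.hr H.hk (W_pos H.hh H.hp (t + s) x) (W_pos H.hh H.hp t (x + √s • z))
      (u_le H.hα0 H.hα1 (BC.schwartz f) H.hh H.hp H.hfh (t + s) x)
      (u_le H.hα0 H.hα1 (BC.schwartz f) H.hh H.hp H.hfh t (x + √s • z))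
    simp only [L, c1, c2, Rem, Bu]
    linarith
  have hR0 : ∀ z, 0 ≤ Rem f h k s t x z := by
    intro z
    unfold Rem
    have h1 := Real.rpow_nonneg (W_pos H.hh H.hp (t + s) x).le k
    have h2 := Real.rpow_nonneg (W_pos H.hh H.hp t (x + √s • z)).le k
    have := le_min h2 h1
    positivity
  calc _ ≤ ENNReal.ofReal (∫ z, L z ∂gam) + ∫⁻ z, ENNReal.ofReal (Bu f h k r t (x + √s • z) - L z) ∂gam := by
        rw [eL]
        gcongr with z
        exact hle z
    _ = ENNReal.ofReal (∫ z, L z ∂gam) + ENNReal.ofReal (∫ z, (Bu f h k r t (x + √s • z) - L z) ∂gam) := by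
        congr 1
        exact (ofReal_integral_eq_lintegral_ofReal (iG.sub iL)
          (Eventually.of_forall fun z => (hR0 z).trans (hle z))).symm
    _ = ENNReal.ofReal (∫ z, Bu f h k r t (x + √s • z) ∂gam) := by
        rw [← ENNReal.ofReal_add]
        · rw [integral_sub iG iL]; congr 1; ring
        · rw [eL]; exact Bu_nonneg H _ _
        · exact integral_nonneg fun z => (hR0 z).trans (hle z)
    _ = _ := ofReal_integral_eq_lintegral_ofReal iG (Eventually.of_forall fun z => Bu_nonneg H _ _)

/-- dissipation -/
def Ds (f : 𝓢(E3, ℝ)) (h : E3 → ℝ) (k : ℝ) (s t : ℝ) : ENNReal :=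
  ∫⁻ p : E3 × E3, ENNReal.ofReal (Rem f h k s t p.1 p.2) ∂(volume.prod gam)

lemma step (H : Hyp f h α k r) {s t : ℝ} (hs : 0 ≤ s) (ht : 0 ≤ t) :
    En f h k r (t + s) + Ds f h k s t ≤ En f h k r t := by
  unfold En Ds
  have mR : Measurable fun p : E3 × E3 => ENNReal.ofReal (Rem f h k s t p.1 p.2) :=
    ((Rem_cont H s).comp (by fun_prop : Continuous fun p : E3 × E3 => (t, p))).measurable.ennreal_ofReal
  have mB : Measurable fun x => ENNReal.ofReal (Bu f h k r (t + s) x) := (Bu_BC H _).1.measurable.ennreal_ofReal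
  have mB2 : Measurable fun p : E3 × E3 => ENNReal.ofReal (Bu f h k r t (p.1 + √s • p.2)) :=
    ((Bu_BC H t).1.comp (by fun_prop : Continuous fun p : E3 × E3 => p.1 + √s • p.2)).measurable.ennreal_ofReal
  rw [lintegral_prod _ mR.aemeasurable, ← lintegral_add_left mB]
  refine (lintegral_mono fun x => step_pt H hs ht x).trans ?_
  rw [lintegral_lintegral_swap mB2.aemeasurable]
  have : ∀ z : E3, ∫⁻ x, ENNReal.ofReal (Bu f h k r t (x + √s • z)) = ∫⁻ x, ENNReal.ofReal (Bu f h k r t x) :=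
    fun z => lintegral_add_right_eq_self (fun x => ENNReal.ofReal (Bu f h k r t x)) _
  simp_rw [this]
  simp

lemma En_zero (H : Hyp f h α k r) : En f h k r 0 ≤ ENNReal.ofReal (1 + Kc k r) * ∫⁻ x, ENNReal.ofReal (h x ^ r) := by
  unfold En
  rw [← lintegral_const_mul']
  · refine lintegral_mono fun x => ?_
    have h0 := Kc_nonneg (k := k) H.hr
    rw [← ENNReal.ofReal_mul (by linarith)]
    refine ENNReal.ofReal_le_ofReal ?_
    have := Bu_le H 0 x
    rwa [P_zero] at this
  · exact ENNReal.ofReal_ne_top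

lemma En_le (H : Hyp f h α k r) {t : ℝ} (ht : 0 ≤ t) : En f h k r t ≤ En f h k r 0 := by
  have := step H ht le_rfl
  rw [zero_add] at this
  exact le_self_add.trans this

lemma En_meas (H : Hyp f h α k r) : Measurable (En f h k r) := by
  unfold En
  exact Measurable.lintegral_prod_right' (f := fun p : ℝ × E3 => ENNReal.ofReal (Bu f h k r p.1 p.2))
    (Bu_cont H).measurable.ennreal_ofReal

lemma Ds_int (H : Hyp f h α k r) (hfin : En f h k r 0 ≠ ⊤) {s T : ℝ} (hs : 0 < s) (hT : s ≤ T) :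
    ∫⁻ t in Ioc 0 T, Ds f h k s t ≤ ENNReal.ofReal s * En f h k r 0 := by
  have h1 : ∫⁻ t in Ioc 0 T, En f h k r (t + s) + Ds f h k s t ≤ ∫⁻ t in Ioc 0 T, En f h k r t :=
    setLIntegral_mono (En_meas H) fun t ht => step H hs.le ht.1.le
  have hm : Measurable fun t => En f h k r (t + s) := (En_meas H).comp (measurable_id.add_const s)
  rw [lintegral_add_left hm] at h1
  have h2 : ∫⁻ t in Ioc 0 T, En f h k r (t + s) = ∫⁻ t in Ioc s (T + s), En f h k r t := by
    have := (measurePreserving_add_right (volume : Measure ℝ) s).setLIntegral_comp_preimage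
      (s := Ioc s (T + s)) measurableSet_Ioc (En_meas H)
    rw [← this]
    congr 2
    ext t; simp
  have h3 : ∫⁻ t in Ioc s T, En f h k r t ≤ ∫⁻ t in Ioc s (T + s), En f h k r t :=
    lintegral_mono_set (Ioc_subset_Ioc le_rfl (by linarith))
  have h4 : ∫⁻ t in Ioc 0 T, En f h k r t ≤ (∫⁻ t in Ioc 0 s, En f h k r t) + ∫⁻ t in Ioc s T, En f h k r t := by
    rw [← Ioc_union_Ioc_eq_Ioc hs.le hT]
    exact lintegral_union_le _ _ _
  have hb : ∀ a b : ℝ, 0 ≤ a → ∫⁻ t in Ioc a b, En f h k r t ≤ ENNReal.ofReal (b - a) * En f h k r 0 := by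
    intro a b ha
    calc ∫⁻ t in Ioc a b, En f h k r t ≤ ∫⁻ t in Ioc a b, En f h k r 0 :=
          setLIntegral_mono measurable_const fun t ht => En_le H (ha.trans ht.1.le)
      _ = _ := by simp [mul_comm]
  have hfin2 : ∫⁻ t in Ioc s T, En f h k r t ≠ ⊤ :=
    ((hb s T hs.le).trans_lt (ENNReal.mul_lt_top ENNReal.ofReal_lt_top hfin.lt_top)).ne
  have h5 : (∫⁻ t in Ioc s T, En f h k r t) + ∫⁻ t in Ioc 0 T, Ds f h k s t
      ≤ (∫⁻ t in Ioc s T, En f h k r t) + ∫⁻ t in Ioc 0 s, En f h k r t := by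
    rw [h2] at h1
    calc _ ≤ _ := add_le_add_left h3 _
      _ ≤ _ := h1
      _ ≤ _ := h4
      _ = _ := add_comm _ _
  have h6 := (ENNReal.add_le_add_iff_left hfin2).1 h5
  refine h6.trans ?_
  simpa using hb 0 s le_rfl

end
end HeatCZ

namespace HeatCZ
open ProbabilityTheory Filter Topology Set
open scoped SchwartzMap LineDeriv Laplacian RealInnerProductSpace

/-- step sizes -/
def sn (n : ℕ) : ℝ := 1 / ((n : ℝ) + 1)

lemma sn_pos (n : ℕ) : 0 < sn n := by unfold sn; positivity

lemma sn_lim : Tendsto sn atTop (𝓝 0) := tendsto_one_div_add_atTop_nhds_zero_nat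

lemma sn_lim' : Tendsto sn atTop (𝓝[≠] 0) :=
  tendsto_nhdsWithin_iff.2 ⟨sn_lim, Eventually.of_forall fun n => (sn_pos n).ne'⟩

lemma sq_lim : Tendsto (fun n => √(sn n)) atTop (𝓝 0) := by
  have := (Real.continuous_sqrt.tendsto 0).comp sn_lim
  simpa [Function.comp_def] using this

lemma sq_lim' : Tendsto (fun n => √(sn n)) atTop (𝓝[≠] 0) :=
  tendsto_nhdsWithin_iff.2 ⟨sq_lim, Eventually.of_forall fun n => (Real.sqrt_pos.2 (sn_pos n)).ne'⟩

lemma gauss_sq (L : StrongDual ℝ E3) : ∫⁻ z, ENNReal.ofReal ((L z) ^ 2) ∂gam = ENNReal.ofReal (‖L‖ ^ 2) := by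
  have hi : Integrable (fun z => (L z) ^ 2) gam := by
    have : MemLp (fun z => L z) 2 gam := IsGaussian.memLp_dual gam L 2 (by norm_num)
    exact this.integrable_sq
  rw [← ofReal_integral_eq_lintegral_ofReal hi (Eventually.of_forall fun z => sq_nonneg _),
    ← variance_dual_stdGaussian L, variance_eq_integral (by fun_prop), integral_strongDual_stdGaussian]
  simp

section
variable {f : 𝓢(E3, ℝ)} {h : E3 → ℝ} {α k r : ℝ}

lemma Rem_lim (H : Hyp f h α k r) {t : ℝ} (ht : 0 < t) (x z : E3) :
    Tendsto (fun n => Rem f h k (sn n) t x z / sn n) atTop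
      (𝓝 (1 / 2 * P t h x ^ k * (fderiv ℝ (P t f) x z) ^ 2)) := by
  have h1 : Tendsto (fun n => P t h (x + √(sn n) • z) ^ k) atTop (𝓝 (P t h x ^ k)) := by
    have c : Continuous fun τ : ℝ => P t h (x + τ • z) ^ k :=
      (Wk_cont H k).comp (by fun_prop : Continuous fun τ : ℝ => (t, x + τ • z))
    simpa [Function.comp_def] using (c.tendsto 0).comp sq_lim
  have h2 : Tendsto (fun n => P (t + sn n) h x ^ k) atTop (𝓝 (P t h x ^ k)) := by
    have c : Continuous fun τ : ℝ => P (t + τ) h x ^ k :=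
      (Wk_cont H k).comp (by fun_prop : Continuous fun τ : ℝ => (t + τ, x))
    simpa [Function.comp_def] using (c.tendsto 0).comp sn_lim
  have h3 : Tendsto (fun n => (√(sn n))⁻¹ * (P t f (x + √(sn n) • z) - P t f x)) atTop
      (𝓝 (fderiv ℝ (P t f) x z)) := by
    have hd : HasFDerivAt (P t f) (fderiv ℝ (P t f) x) x := (P_hasFDerivAt f t x).differentiableAt.hasFDerivAt
    have hl : HasDerivAt (fun τ : ℝ => P t f (x + τ • z)) (fderiv ℝ (P t f) x z) 0 := hd.hasLineDerivAt z
    have := hl.tendsto_slope_zero.comp sq_lim'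
    simpa [Function.comp_def] using this
  have h4 : Tendsto (fun n => √(sn n) * ((sn n)⁻¹ * (P (t + sn n) f x - P t f x))) atTop (𝓝 0) := by
    have := (P_deriv f ht x).tendsto_slope_zero.comp sn_lim'
    have := sq_lim.mul this
    simpa [Function.comp_def] using this
  have h5 := (((tendsto_const_nhds (x := (1 / 2 : ℝ))).mul (h1.min h2)).mul ((h3.sub h4).pow 2))
  rw [min_self, sub_zero] at h5
  refine h5.congr fun n => ?_
  unfold Rem
  have hs := sn_pos n
  have hq := Real.sqrt_pos.2 hs
  have e : sn n = √(sn n) ^ 2 := (Real.sq_sqrt hs.le).symm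
  have e2 : √(sn n) * ((sn n)⁻¹ * (P (t + sn n) f x - P t f x)) = (√(sn n))⁻¹ * (P (t + sn n) f x - P t f x) := by
    rw [← mul_assoc]; congr 1
    nth_rewrite 2 [e]
    field_simp
  rw [e2, ← mul_sub, mul_pow, inv_pow, Real.sq_sqrt hs.le]
  rw [div_eq_mul_inv]
  ring

lemma energy (H : Hyp f h α k r) (hfin : En f h k r 0 ≠ ⊤) {T : ℝ} (hT : 0 < T) (i : Fin 3) :
    ∫⁻ t in Ioc 0 T, ∫⁻ x, ENNReal.ofReal (P t h x ^ k * (P t (dd i f) x) ^ 2) ≤ 2 * En f h k r 0 := by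
  let μ := (volume.restrict (Ioc 0 T)).prod ((volume : Measure E3).prod gam)
  let F : ℕ → ℝ × E3 × E3 → ENNReal := fun n p => ENNReal.ofReal (Rem f h k (sn n) p.1 p.2.1 p.2.2 / sn n)
  have mF : ∀ n, Measurable (F n) := fun n => ((Rem_cont H (sn n)).measurable.div_const _).ennreal_ofReal
  have hF : ∀ n, sn n ≤ T → ∫⁻ p, F n p ∂μ ≤ En f h k r 0 := by
    intro n hn
    have hs := sn_pos n
    have e : ∀ p, F n p = ENNReal.ofReal (Rem f h k (sn n) p.1 p.2.1 p.2.2) * (ENNReal.ofReal (sn n))⁻¹ := by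
      intro p
      simp only [F]
      rw [ENNReal.ofReal_div_of_pos hs, div_eq_mul_inv]
    have h0 : ENNReal.ofReal (sn n) ≠ 0 := by simpa using hs
    simp_rw [e]
    rw [lintegral_mul_const' _ _ (by simpa using hs)]
    have m2 : Measurable fun p : ℝ × E3 × E3 => ENNReal.ofReal (Rem f h k (sn n) p.1 p.2.1 p.2.2) :=
      (Rem_cont H (sn n)).measurable.ennreal_ofReal
    rw [lintegral_prod _ m2.aemeasurable]
    have := Ds_int H hfin hs hn
    unfold Ds at this
    calc _ ≤ (ENNReal.ofReal (sn n) * En f h k r 0) * (ENNReal.ofReal (sn n))⁻¹ := by gcongr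
      _ = _ := by
        rw [mul_comm, ← mul_assoc, ENNReal.inv_mul_cancel h0 ENNReal.ofReal_ne_top, one_mul]
  have fat := lintegral_liminf_le (μ := μ) (u := atTop) mF
  have hlim : liminf (fun n => ∫⁻ p, F n p ∂μ) atTop ≤ En f h k r 0 := by
    have : ∀ᶠ n in atTop, ∫⁻ p, F n p ∂μ ≤ En f h k r 0 := by
      filter_upwards [sn_lim.eventually (Iic_mem_nhds hT)] with n hn using hF n hn
    exact liminf_le_of_frequently_le' this.frequently
  have key : ∫⁻ t in Ioc 0 T, ∫⁻ x, ENNReal.ofReal (1 / 2) * ENNReal.ofReal (P t h x ^ k * (P t (dd i f) x) ^ 2)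
      ≤ ∫⁻ p, liminf (fun n => F n p) atTop ∂μ := by
    have mL : Measurable fun p => liminf (fun n => F n p) atTop := Measurable.liminf mF
    rw [lintegral_prod _ mL.aemeasurable]
    refine setLIntegral_mono' measurableSet_Ioc fun t ht => ?_
    have mL2 : Measurable fun y : E3 × E3 => liminf (fun n => F n (t, y)) atTop :=
      mL.comp measurable_prodMk_left
    rw [lintegral_prod _ mL2.aemeasurable]
    refine lintegral_mono fun x => ?_
    have : ∀ z : E3, liminf (fun n => F n (t, x, z)) atTop
        = ENNReal.ofReal (1 / 2 * P t h x ^ k) * ENNReal.ofReal ((fderiv ℝ (P t f) x z) ^ 2) := by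
      intro z
      rw [← ENNReal.ofReal_mul (by have := W_pos H.hh H.hp t x; positivity)]
      exact ((ENNReal.continuous_ofReal.tendsto _).comp (Rem_lim H ht.1 x z)).liminf_eq
    simp only [this]
    rw [lintegral_const_mul' _ _ ENNReal.ofReal_ne_top, gauss_sq]
    have hW := W_pos H.hh H.hp t x
    rw [← ENNReal.ofReal_mul (by norm_num), ← ENNReal.ofReal_mul (by positivity)]
    refine ENNReal.ofReal_le_ofReal ?_
    rw [← mul_assoc]
    refine mul_le_mul_of_nonneg_left ?_ (by positivity)
    rw [← P_fderiv, ← sq_abs]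
    refine pow_le_pow_left₀ (abs_nonneg _) ?_ 2
    have := (fderiv ℝ (P t f) x).le_opNorm (ee i)
    have e1 : ‖ee i‖ = 1 := by simp [ee]
    rwa [e1, mul_one] at this
  have k2 := (key.trans fat).trans hlim
  simp_rw [lintegral_const_mul' _ _ (ENNReal.ofReal_ne_top (r := 1 / 2))] at k2
  calc _ = 2 * (ENNReal.ofReal (1 / 2) * ∫⁻ t in Ioc 0 T, ∫⁻ x, ENNReal.ofReal (P t h x ^ k * (P t (dd i f) x) ^ 2)) := by
        rw [← mul_assoc]
        have : (2 : ENNReal) * ENNReal.ofReal (1 / 2) = 1 := by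
          rw [show (2 : ENNReal) = ENNReal.ofReal 2 by simp, ← ENNReal.ofReal_mul (by norm_num)]; norm_num
        rw [this, one_mul]
    _ ≤ _ := by gcongr

lemma energy' (H : Hyp f h α k r) (hfin : ∫⁻ x, ENNReal.ofReal (h x ^ r) ≠ ⊤) {T : ℝ} (hT : 0 < T) (i : Fin 3) :
    ∫⁻ t in Ioc 0 T, ∫⁻ x, ENNReal.ofReal (P t h x ^ k * (P t (dd i f) x) ^ 2)
      ≤ 2 * (ENNReal.ofReal (1 + Kc k r) * ∫⁻ x, ENNReal.ofReal (h x ^ r)) := by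
  have h1 := En_zero H
  have h2 : En f h k r 0 ≠ ⊤ := (h1.trans_lt (ENNReal.mul_lt_top ENNReal.ofReal_lt_top hfin.lt_top)).ne
  exact (energy H h2 hT i).trans (by gcongr)

end
end HeatCZ

namespace HeatCZ
open ProbabilityTheory Filter Topology Set
open scoped SchwartzMap LineDeriv Laplacian RealInnerProductSpace

lemma schwartz_rpow_int (f : 𝓢(E3, ℝ)) {p : ℝ} (hp : 0 < p) : Integrable fun x => |f x| ^ p := by
  have h0 : ENNReal.ofReal p ≠ 0 := by simpa using hp
  have := (f.memLp (ENNReal.ofReal p) volume).integrable_norm_rpow h0 ENNReal.ofReal_ne_top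
  simpa [ENNReal.toReal_ofReal hp.le] using this

/-- the majorant -/
def Gm (f : Fin 3 → 𝓢(E3, ℝ)) (g : 𝓢(E3, ℝ)) (p p' ε : ℝ) (x : E3) : ℝ :=
  (∑ j, |f j x| ^ p) + |g x| ^ p' + ε * dens x

section
variable {f : Fin 3 → 𝓢(E3, ℝ)} {g : 𝓢(E3, ℝ)} {p p' ε : ℝ}

lemma Gm_pos (hε : 0 < ε) (x : E3) : 0 < Gm f g p p' ε x := by
  unfold Gm
  have := mul_pos hε (dens_pos x)
  have h1 : 0 ≤ ∑ j, |f j x| ^ p := Finset.sum_nonneg fun j _ => by positivity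
  positivity

lemma Gm_cont (hp : 0 < p) (hp' : 0 < p') : Continuous (Gm f g p p' ε) := by
  unfold Gm
  have h1 : ∀ j, Continuous fun x => |f j x| ^ p := fun j =>
    (f j).continuous.abs.rpow_const fun x => Or.inr hp.le
  have h2 : Continuous fun x => |g x| ^ p' := g.continuous.abs.rpow_const fun x => Or.inr hp'.le
  exact ((continuous_finsetSum _ fun j _ => h1 j).add h2).add (continuous_const.mul dens_cont)

lemma dens_le (x : E3) : dens x ≤ (2 * Real.pi) ^ (-(3/2) : ℝ) := by
  unfold dens
  refine mul_le_of_le_one_right (by positivity) ?_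
  rw [Real.exp_le_one_iff]
  have := sq_nonneg ‖x‖
  linarith

lemma rpow_bd (f : 𝓢(E3, ℝ)) {p : ℝ} (hp : 0 < p) : ∃ M, ∀ x, |f x| ^ p ≤ M := by
  obtain ⟨M, hM⟩ := (BC.schwartz f).2
  exact ⟨M ^ p, fun x => Real.rpow_le_rpow (abs_nonneg _) (hM x) hp.le⟩

lemma Gm_bd (hp : 0 < p) (hp' : 0 < p') (hε : 0 < ε) : ∃ M, ∀ x, Gm f g p p' ε x ≤ M := by
  choose M hM using fun j => rpow_bd (f j) hp
  obtain ⟨N, hN⟩ := rpow_bd g hp'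
  refine ⟨∑ j, M j + N + ε * (2 * Real.pi) ^ (-(3/2) : ℝ), fun x => ?_⟩
  unfold Gm
  have := mul_le_mul_of_nonneg_left (dens_le x) hε.le
  have h1 : ∑ j, |f j x| ^ p ≤ ∑ j, M j := Finset.sum_le_sum fun j _ => hM j x
  linarith [hN x]

lemma Gm_int (hp : 0 < p) (hp' : 0 < p') : Integrable (Gm f g p p' ε) ∧
    ∫ x, Gm f g p p' ε x = (∑ j, ∫ x, |f j x| ^ p) + (∫ x, |g x| ^ p') + ε * ∫ x, dens x := by
  have i1 : ∀ j, Integrable fun x => |f j x| ^ p := fun j => schwartz_rpow_int _ hp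
  have i1' : Integrable fun x => ∑ j, |f j x| ^ p := integrable_finsetSum _ fun j _ => i1 j
  have i2 : Integrable fun x => |g x| ^ p' := schwartz_rpow_int _ hp'
  have i3 : Integrable fun x => ε * dens x := dens_integrable.const_mul _
  have i12 : Integrable fun x => (∑ j, |f j x| ^ p) + |g x| ^ p' := i1'.add i2
  refine ⟨i12.add i3, ?_⟩
  unfold Gm
  rw [integral_add i12 i3, integral_add i1' i2, integral_finsetSum _ fun j _ => i1 j, integral_const_mul]

lemma Gm_hyp {G : E3 → ℝ} (hG : ∀ x, 0 < G x) (hGc : Continuous G) (hGb : ∃ M, ∀ x, G x ≤ M)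
    {f : 𝓢(E3, ℝ)} {p r : ℝ} (hr : 1 < r) (hrp : r < p) (hf : ∀ x, |f x| ^ p ≤ G x) :
    Hyp f (fun x => G x ^ (1 / r)) (r / p) (r - 2 * (r / p)) r := by
  have hp : 0 < p := by linarith
  have hr0 : 0 < r := by linarith
  refine ⟨by positivity, (div_lt_one hp).2 hrp, hr, rfl, ?_, fun x => Real.rpow_pos_of_pos (hG x) _, ?_⟩
  · refine ⟨hGc.rpow_const fun x => Or.inl (hG x).ne', ?_⟩
    obtain ⟨M, hM⟩ := hGb
    refine ⟨M ^ (1 / r), fun x => ?_⟩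
    rw [abs_of_nonneg (Real.rpow_nonneg (hG x).le _)]
    exact Real.rpow_le_rpow (hG x).le (hM x) (by positivity)
  · intro x
    have h1 := Real.rpow_le_rpow (by positivity) (hf x) (by positivity : 0 ≤ 1 / p)
    rw [← Real.rpow_mul (abs_nonneg _), mul_one_div_cancel hp.ne', Real.rpow_one] at h1
    refine h1.trans (le_of_eq ?_)
    rw [← Real.rpow_mul (hG x).le]
    congr 1
    field_simp

lemma sum_abs_mul_le (a : Fin 3 → ℝ) (b c : ℝ) (hc : 0 < c) :
    |(∑ j, a j) * b| ≤ ∑ j, (c * a j ^ 2 + c⁻¹ * b ^ 2) := by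
  rw [Finset.sum_mul]
  refine (Finset.abs_sum_le_sum_abs _ _).trans (Finset.sum_le_sum fun j _ => ?_)
  have h1 : 0 ≤ c * (|a j| - c⁻¹ * |b|) ^ 2 := by positivity
  have h2 : c * (|a j| - c⁻¹ * |b|) ^ 2 = c * a j ^ 2 + c⁻¹ * b ^ 2 - 2 * |a j * b| := by
    rw [abs_mul, ← sq_abs (a j), ← sq_abs b]; field_simp; ring
  have h3 := abs_nonneg (a j * b)
  linarith

lemma P_sum (F : Fin 3 → 𝓢(E3, ℝ)) (t : ℝ) (x : E3) : P t (∑ j, F j : 𝓢(E3, ℝ)) x = ∑ j, P t (F j) x := by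
  unfold P
  rw [← integral_finsetSum _ fun j _ => (BC.schwartz (F j)).integrable t x]
  simp

lemma swap_sum (T : ℝ) {a : Fin 3 → ℝ → E3 → ENNReal} {b : ℝ → E3 → ENNReal}
    (ha : ∀ j, Measurable fun q : ℝ × E3 => a j q.1 q.2) (hb : Measurable fun q : ℝ × E3 => b q.1 q.2) :
    ∫⁻ t in Ioc 0 T, ∫⁻ x, ∑ j, (a j t x + b t x) =
      ∑ j, ((∫⁻ t in Ioc 0 T, ∫⁻ x, a j t x) + ∫⁻ t in Ioc 0 T, ∫⁻ x, b t x) := by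
  have a1 : ∀ t j, Measurable fun x => a j t x := fun t j => (ha j).comp measurable_prodMk_left
  have a2 : ∀ t, Measurable fun x => b t x := fun t => hb.comp measurable_prodMk_left
  have b1 : ∀ j, Measurable fun t => ∫⁻ x, a j t x := fun j => (ha j).lintegral_prod_right'
  have b2 : Measurable fun t => ∫⁻ x, b t x := hb.lintegral_prod_right'
  have a3 : ∀ t j, Measurable fun x => a j t x + b t x := fun t j => (a1 t j).add (a2 t)
  have b3 : ∀ j, Measurable fun t => (∫⁻ x, a j t x) + ∫⁻ x, b t x := fun j => (b1 j).add b2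
  have e1 : ∀ t, ∫⁻ x, ∑ j, (a j t x + b t x) = ∑ j, ((∫⁻ x, a j t x) + ∫⁻ x, b t x) := by
    intro t
    rw [lintegral_finsetSum _ fun j _ => a3 t j]
    refine Finset.sum_congr rfl fun j _ => ?_
    rw [lintegral_add_left (a1 t j)]
  simp_rw [e1]
  rw [lintegral_finsetSum _ fun j _ => b3 j]
  refine Finset.sum_congr rfl fun j _ => ?_
  rw [lintegral_add_left (b1 j)]

/-- bilinear bound with epsilon -/
lemma bilin_eps {r : ℝ} (hr : 1 < r) (hrp : r < p) (hrp' : r < p') (hpp : 1 / p + 1 / p' = 1)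
    {w : 𝓢(E3, ℝ)} (hw : lap w = ∑ j, dd j (f j)) (i : Fin 3) (hε : 0 < ε) :
    |∫ x, dd i w x * g x| ≤ (6 * (2 + Kc (r - 2 * (r / p)) r + Kc (r - 2 * (r / p')) r)) *
      ((∑ j, ∫ x, |f j x| ^ p) + (∫ x, |g x| ^ p') + ε * ∫ x, dens x) := by
  have hp : 0 < p := by linarith
  have hp' : 0 < p' := by linarith
  have hr0 : 0 < r := by linarith
  obtain ⟨Gi, Ge⟩ := Gm_int (f := f) (g := g) (ε := ε) hp hp'
  rw [← Ge]
  set G := Gm f g p p' ε with hGdef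
  have hG : ∀ x, 0 < G x := Gm_pos hε
  set h : E3 → ℝ := fun x => G x ^ (1 / r) with hh
  set k := r - 2 * (r / p) with hk
  set k' := r - 2 * (r / p') with hk'
  have hkk : k' = -k := by
    have : r * (1 / p + 1 / p') = r := by rw [hpp, mul_one]
    have e : r * (1 / p + 1 / p') = r / p + r / p' := by ring
    rw [hk, hk']; linarith
  have H1 : ∀ j, Hyp (f j) h (r / p) k r := fun j =>
    Gm_hyp hG (Gm_cont hp hp') (Gm_bd hp hp' hε) hr hrp fun x => by
      simp only [hGdef, Gm]
      have h1 : |f j x| ^ p ≤ ∑ j, |f j x| ^ p :=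
        Finset.single_le_sum (f := fun j => |f j x| ^ p) (fun j _ => by positivity) (Finset.mem_univ j)
      have h2 : 0 ≤ |g x| ^ p' := by positivity
      have h3 := mul_pos hε (dens_pos x)
      linarith
  have H2 : Hyp g h (r / p') k' r :=
    Gm_hyp hG (Gm_cont hp hp') (Gm_bd hp hp' hε) hr hrp' fun x => by
      simp only [hGdef, Gm]
      have h1 : 0 ≤ ∑ j, |f j x| ^ p := Finset.sum_nonneg fun j _ => by positivity
      have h3 := mul_pos hε (dens_pos x)
      linarith
  have hGint : ∫⁻ x, ENNReal.ofReal (h x ^ r) = ENNReal.ofReal (∫ x, G x) := by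
    rw [ofReal_integral_eq_lintegral_ofReal Gi (Eventually.of_forall fun x => (hG x).le)]
    congr 1; ext x
    simp only [hh]
    rw [← Real.rpow_mul (hG x).le, one_div_mul_cancel hr0.ne', Real.rpow_one]
  have hfin : ∫⁻ x, ENNReal.ofReal (h x ^ r) ≠ ⊤ := by rw [hGint]; exact ENNReal.ofReal_ne_top
  have hGI : 0 ≤ ∫ x, G x := integral_nonneg fun x => (hG x).le
  have K1 := Kc_nonneg (k := k) hr
  have K2 := Kc_nonneg (k := k') hr
  have E1 := fun j (T : ℝ) (hT : 0 < T) => energy' (H1 j) hfin hT j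
  have E2 := fun (T : ℝ) (hT : 0 < T) => energy' H2 hfin hT i
  rw [hGint] at E2
  simp_rw [hGint] at E1
  have c2 : (2 : ENNReal) = ENNReal.ofReal 2 := by simp
  simp_rw [c2, ← ENNReal.ofReal_mul (by linarith : 0 ≤ 1 + Kc k r), ← ENNReal.ofReal_mul (by norm_num : (0:ℝ) ≤ 2)] at E1
  simp_rw [c2, ← ENNReal.ofReal_mul (by linarith : 0 ≤ 1 + Kc k' r), ← ENNReal.ofReal_mul (by norm_num : (0:ℝ) ≤ 2)] at E2
  have fin := dual_bound w g i (ENNReal.ofReal ((6 * (2 + Kc k r + Kc k' r)) * ∫ x, G x)) ?_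
  · exact (ENNReal.ofReal_le_ofReal_iff (by positivity)).1 fin
  intro T hT
  have m1 : ∀ j, Measurable fun q : ℝ × E3 => ENNReal.ofReal (P q.1 h q.2 ^ k * (P q.1 (dd j (f j)) q.2) ^ 2) :=
    fun j => ((Wk_cont H2 k).mul ((BC.schwartz (dd j (f j))).cont.pow 2)).measurable.ennreal_ofReal
  have m2 : Measurable fun q : ℝ × E3 => ENNReal.ofReal (P q.1 h q.2 ^ k' * (P q.1 (dd i g) q.2) ^ 2) :=
    ((Wk_cont H2 k').mul ((BC.schwartz (dd i g)).cont.pow 2)).measurable.ennreal_ofReal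
  have pt : ∀ t x, ENNReal.ofReal |P t (lap w) x * P t (dd i g) x| ≤
      ∑ j, (ENNReal.ofReal (P t h x ^ k * (P t (dd j (f j)) x) ^ 2) + ENNReal.ofReal (P t h x ^ k' * (P t (dd i g) x) ^ 2)) := by
    intro t x
    have hW : 0 < P t h x := W_pos H2.hh H2.hp t x
    have e : ∀ j, ENNReal.ofReal (P t h x ^ k * (P t (dd j (f j)) x) ^ 2) + ENNReal.ofReal (P t h x ^ k' * (P t (dd i g) x) ^ 2)
       = ENNReal.ofReal (P t h x ^ k * (P t (dd j (f j)) x) ^ 2 + P t h x ^ k' * (P t (dd i g) x) ^ 2) := fun j =>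
      (ENNReal.ofReal_add (by positivity) (by positivity)).symm
    simp_rw [e]
    rw [← ENNReal.ofReal_sum_of_nonneg fun j _ => by positivity]
    refine ENNReal.ofReal_le_ofReal ?_
    rw [hw, P_sum, hkk, Real.rpow_neg hW.le]
    exact sum_abs_mul_le _ _ _ (by positivity)
  calc _ ≤ ∫⁻ t in Ioc 0 T, ∫⁻ x, ∑ j, (ENNReal.ofReal (P t h x ^ k * (P t (dd j (f j)) x) ^ 2)
          + ENNReal.ofReal (P t h x ^ k' * (P t (dd i g) x) ^ 2)) := by
        exact lintegral_mono fun t => lintegral_mono fun x => pt t x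
    _ = ∑ j, ((∫⁻ t in Ioc 0 T, ∫⁻ x, ENNReal.ofReal (P t h x ^ k * (P t (dd j (f j)) x) ^ 2))
          + ∫⁻ t in Ioc 0 T, ∫⁻ x, ENNReal.ofReal (P t h x ^ k' * (P t (dd i g) x) ^ 2)) := by
        exact swap_sum T (a := fun j t x => ENNReal.ofReal (P t h x ^ k * (P t (dd j (f j)) x) ^ 2))
          (b := fun t x => ENNReal.ofReal (P t h x ^ k' * (P t (dd i g) x) ^ 2)) m1 m2
    _ ≤ ∑ j : Fin 3, (ENNReal.ofReal (2 * ((1 + Kc k r) * ∫ x, G x)) + ENNReal.ofReal (2 * ((1 + Kc k' r) * ∫ x, G x))) := by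
        gcongr with j
        · exact E1 j T hT
        · exact E2 T hT
    _ = _ := by
        rw [← ENNReal.ofReal_add (by positivity) (by positivity), Finset.sum_const, Finset.card_univ, Fintype.card_fin,
          ← ENNReal.ofReal_nsmul]
        congr 1
        simp only [nsmul_eq_mul]; push_cast; ring

end

lemma exists_C {p p' : ℝ} (hp : 1 < p) (hp' : 1 < p') (hpp : 1 / p + 1 / p' = 1) : ∃ C : ℝ, 0 < C ∧
    ∀ (f : Fin 3 → 𝓢(E3, ℝ)) (g w : 𝓢(E3, ℝ)), lap w = ∑ j, dd j (f j) → ∀ i,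
    |∫ x, dd i w x * g x| ≤ C * ((∑ j, ∫ x, |f j x| ^ p) + (∫ x, |g x| ^ p')) := by
  obtain ⟨r, hr, hr2⟩ := exists_between (lt_min hp hp')
  have K1 := Kc_nonneg (k := r - 2 * (r / p)) hr
  have K2 := Kc_nonneg (k := r - 2 * (r / p')) hr
  refine ⟨6 * (2 + Kc (r - 2 * (r / p)) r + Kc (r - 2 * (r / p')) r), by positivity, fun f g w hw i => ?_⟩
  set C := 6 * (2 + Kc (r - 2 * (r / p)) r + Kc (r - 2 * (r / p')) r)
  have key : ∀ ε > 0, |∫ x, dd i w x * g x| ≤ C *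
      ((∑ j, ∫ x, |f j x| ^ p) + (∫ x, |g x| ^ p') + ε * ∫ x, dens x) := fun ε hε =>
    bilin_eps hr (hr2.trans_le (min_le_left _ _)) (hr2.trans_le (min_le_right _ _)) hpp hw i hε
  have lim : Tendsto (fun ε : ℝ => C * ((∑ j, ∫ x, |f j x| ^ p) + (∫ x, |g x| ^ p') + ε * ∫ x, dens x))
      (𝓝[>] 0) (𝓝 (C * ((∑ j, ∫ x, |f j x| ^ p) + (∫ x, |g x| ^ p') + 0 * ∫ x, dens x))) := by
    refine Tendsto.mono_left ?_ nhdsWithin_le_nhds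
    exact Continuous.tendsto (by fun_prop) 0
  rw [zero_mul, add_zero] at lim
  exact ge_of_tendsto lim (eventually_mem_nhdsWithin.mono fun ε hε => key ε hε)

end HeatCZ

namespace HeatCZ
open ProbabilityTheory Filter Topology Set
open scoped SchwartzMap LineDeriv Laplacian RealInnerProductSpace

lemma norm_toLp_rpow {g : E3 → ℝ} {s : ℝ} (hs : 0 < s) (hg : MemLp g (ENNReal.ofReal s) volume) :
    ‖hg.toLp g‖ ^ s = ∫ x, |g x| ^ s := by
  have h0 : ENNReal.ofReal s ≠ 0 := by simpa using hs
  have hnn : 0 ≤ ∫ x, |g x| ^ s := integral_nonneg fun x => by positivity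
  rw [Lp.norm_toLp, hg.eLpNorm_eq_integral_rpow_norm h0 ENNReal.ofReal_ne_top]
  simp only [ENNReal.toReal_ofReal hs.le, Real.norm_eq_abs]
  rw [ENNReal.toReal_ofReal (by positivity), ← Real.rpow_mul hnn, inv_mul_cancel₀ hs.ne', Real.rpow_one]

lemma pair_bound {p p' : ℝ} (hc : p.HolderConjugate p') {φ : 𝓢(E3, ℝ)} {C A : ℝ}
    (hb : ∀ g : 𝓢(E3, ℝ), |∫ x, φ x * g x| ≤ C * (A + ∫ x, |g x| ^ p'))
    {g : E3 → ℝ} (hg : MemLp g (ENNReal.ofReal p') volume) :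
    |∫ x, φ x * g x| ≤ C * (A + ∫ x, |g x| ^ p') := by
  have hp' : 0 < p' := hc.symm.pos
  haveI : ENNReal.HolderConjugate (ENNReal.ofReal p) (ENNReal.ofReal p') := hc.ennrealOfReal
  haveI : Fact (1 ≤ ENNReal.ofReal p) := ⟨by simpa using hc.lt.le⟩
  haveI : Fact (1 ≤ ENNReal.ofReal p') := ⟨by simpa using hc.symm.lt.le⟩
  let hφ := φ.memLp (ENNReal.ofReal p) volume
  let Λ := (ContinuousLinearMap.mul ℝ ℝ).lpPairing volume (ENNReal.ofReal p) (ENNReal.ofReal p') (hφ.toLp φ)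
  have eΛ : ∀ {g : E3 → ℝ} (hg : MemLp g (ENNReal.ofReal p') volume), Λ (hg.toLp g) = ∫ x, φ x * g x := by
    intro g hg
    simp only [Λ]
    rw [ContinuousLinearMap.lpPairing_eq_integral]
    refine integral_congr_ae ?_
    filter_upwards [hφ.coeFn_toLp, hg.coeFn_toLp] with x h1 h2
    rw [h1, h2]; rfl
  have main : ∀ G : Lp ℝ (ENNReal.ofReal p') (volume : Measure E3), |Λ G| ≤ C * (A + ‖G‖ ^ p') := by
    intro G
    refine (SchwartzMap.denseRange_toLpCLM (F := ℝ) (E := E3) (p := ENNReal.ofReal p') ENNReal.ofReal_ne_top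
      (μ := volume)).induction_on (p := fun G => |Λ G| ≤ C * (A + ‖G‖ ^ p')) G ?_ ?_
    · refine isClosed_le Λ.continuous.abs ?_
      exact continuous_const.mul (continuous_const.add (continuous_norm.rpow_const fun _ => Or.inr hp'.le))
    · intro g
      have hg := g.memLp (ENNReal.ofReal p') volume
      have e : SchwartzMap.toLpCLM ℝ ℝ (ENNReal.ofReal p') volume g = hg.toLp g := rfl
      rw [e, eΛ hg, norm_toLp_rpow hp' hg]
      exact hb g
  have := main (hg.toLp g)
  rwa [eΛ hg, norm_toLp_rpow hp' hg] at this

lemma lp_bound {p p' : ℝ} (hc : p.HolderConjugate p') : ∃ C : ℝ, 0 < C ∧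
    ∀ (f : Fin 3 → 𝓢(E3, ℝ)) (w : 𝓢(E3, ℝ)), lap w = ∑ j, dd j (f j) → ∀ i,
    ∫ x, |dd i w x| ^ p ≤ C * ∑ j, ∫ x, |f j x| ^ p := by
  have hp : 0 < p := hc.pos
  have hp' : 0 < p' := hc.symm.pos
  have h1p := hc.lt
  have h1p' := hc.symm.lt
  obtain ⟨C, hC, hb⟩ := exists_C hc.lt hc.symm.lt (by simpa using hc.inv_add_inv_eq_one)
  obtain ⟨μ, hμ, hμC⟩ : ∃ μ : ℝ, 0 < μ ∧ C * μ ^ p' = μ / 2 := by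
    refine ⟨(1 / (2 * C)) ^ (1 / (p' - 1)), by positivity, ?_⟩
    set μ := (1 / (2 * C)) ^ (1 / (p' - 1)) with hμ
    have hpos : 0 < μ := by positivity
    have e : μ ^ (p' - 1) = 1 / (2 * C) := by
      rw [hμ, ← Real.rpow_mul (by positivity), one_div_mul_cancel (by linarith), Real.rpow_one]
    have : μ ^ p' = μ ^ (p' - 1) * μ := by
      rw [Real.rpow_sub_one hpos.ne']; field_simp
    rw [this, e]; field_simp
  refine ⟨2 * C / μ, by positivity, fun f w hw i => ?_⟩
  set φ := dd i w with hφ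
  set A := ∑ j, ∫ x, |f j x| ^ p
  let g : E3 → ℝ := fun x => μ * (|φ x| ^ (p - 2) * φ x)
  have gm : Measurable g := by
    have := φ.continuous.measurable
    fun_prop
  have hexp : (p - 1) * p' = p := by
    have := hc.mul_eq_add
    linarith
  have g1 : ∀ x, φ x * g x = μ * |φ x| ^ p := by
    intro x
    simp only [g]
    rcases eq_or_ne (φ x) 0 with h | h
    · simp [h, Real.zero_rpow hp.ne']
    · have : |φ x| ^ p = |φ x| ^ (p - 2) * |φ x| ^ 2 := by
        rw [← Real.rpow_natCast, ← Real.rpow_add (abs_pos.2 h)]; norm_num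
      rw [this, sq_abs]; ring
  have g2 : ∀ x, |g x| ^ p' = μ ^ p' * |φ x| ^ p := by
    intro x
    simp only [g]
    rw [abs_mul, abs_of_pos hμ, Real.mul_rpow hμ.le (abs_nonneg _)]
    congr 1
    rcases eq_or_ne (φ x) 0 with h | h
    · simp [h, Real.zero_rpow hp.ne', Real.zero_rpow hp'.ne']
    · have h0 := abs_pos.2 h
      have : |(|φ x| ^ (p - 2) * φ x)| = |φ x| ^ (p - 1) := by
        rw [abs_mul, abs_of_pos (by positivity : 0 < |φ x| ^ (p - 2)), show p - 2 = p - 1 - 1 by ring,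
          Real.rpow_sub_one h0.ne']
        field_simp
      rw [this, ← Real.rpow_mul h0.le, hexp]
  have hiφ := schwartz_rpow_int φ hp
  have gL : MemLp g (ENNReal.ofReal p') volume := by
    refine (integrable_norm_rpow_iff gm.aestronglyMeasurable (by simpa using hp') ENNReal.ofReal_ne_top).1 ?_
    simp only [ENNReal.toReal_ofReal hp'.le, Real.norm_eq_abs, g2]
    exact hiφ.const_mul _
  have key := pair_bound hc (φ := φ) (C := C) (A := A) (fun g => hb f g w hw i) gL
  simp only [g1, g2, integral_const_mul] at key
  set N := ∫ x, |φ x| ^ p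
  have hN : μ * N ≤ C * (A + μ ^ p' * N) := (le_abs_self _).trans key
  have h2 : C * (A + μ ^ p' * N) = C * A + μ / 2 * N := by rw [← hμC]; ring
  rw [h2] at hN
  have h3 : μ * N ≤ 2 * C * A := by linarith
  rw [div_mul_eq_mul_div, le_div_iff₀ hμ]
  linarith

end HeatCZ

namespace HeatCZ
open ProbabilityTheory Filter Topology Set
open scoped SchwartzMap LineDeriv Laplacian RealInnerProductSpace

lemma eLp_schwartz (g : 𝓢(E3, ℝ)) {q : ℝ} (hq : 0 < q) :
    eLpNorm g (ENNReal.ofReal q) volume = ENNReal.ofReal ((∫ x, |g x| ^ q) ^ q⁻¹) := by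
  rw [(g.memLp (ENNReal.ofReal q) volume).eLpNorm_eq_integral_rpow_norm (by simpa using hq) ENNReal.ofReal_ne_top]
  simp [ENNReal.toReal_ofReal hq.le]

lemma lap_eq (u : Fin 3 → 𝓢(E3, ℝ)) (hdiv : ∀ x, ∑ i, pdW u i i x = 0) :
    lap (u 2) = ∑ j, dd j (dd j (u 2) + dd 2 (u j)) := by
  have e1 : ∀ j, dd j (dd j (u 2) + dd 2 (u j)) = dd j (dd j (u 2)) + dd 2 (dd j (u j)) := by
    intro j
    rw [dd_comm 2 j]
    exact LineDeriv.lineDerivOp_add _ _ _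
  have e2 : ∑ j, dd j (u j) = 0 := by
    ext x
    have := hdiv x
    simp only [SchwartzMap.sum_apply, SchwartzMap.zero_apply]
    exact this
  have e3 : ∑ j, dd 2 (dd j (u j)) = 0 := by
    have h1 : dd 2 (∑ j, dd j (u j)) = ∑ j, dd 2 (dd j (u j)) := LineDeriv.lineDerivOp_sum _ _ _
    rw [← h1, e2]
    exact LineDeriv.lineDerivOp_zero _
  simp_rw [e1]
  rw [Finset.sum_add_distrib, e3, add_zero]
  rfl

lemma strain_apply (u : Fin 3 → 𝓢(E3, ℝ)) (x : E3) (i : Fin 3) :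
    (toE3 (((2 : ℝ) • strainW u x).mulVec ![0, 0, 1])) i = pdW u i 2 x + pdW u 2 i x := by
  have e : (toE3 (((2 : ℝ) • strainW u x).mulVec ![0, 0, 1])) i
      = ∑ j, (2 * ((pdW u i j x + pdW u j i x) / 2)) * (![0, 0, 1] : Fin 3 → ℝ) j := rfl
  rw [e, Fin.sum_univ_three]
  simp
  ring

lemma grad_bound (q : ℝ) (hq1 : 1 < q) : ∃ D : ℝ, 0 < D ∧
    ∀ u : Fin 3 → 𝓢(E3, ℝ), (∀ x, ∑ i, pdW u i i x = 0) → ∀ i,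
      eLpNorm (fun x => pdW u i 2 x) (ENNReal.ofReal q) volume ≤
        ENNReal.ofReal D * eLpNorm (fun x => toE3 (((2 : ℝ) • strainW u x).mulVec ![0, 0, 1]))
                (ENNReal.ofReal q) volume := by
  have hq : 0 < q := by linarith
  obtain ⟨C, hC, hb⟩ := lp_bound (Real.HolderConjugate.conjExponent hq1)
  refine ⟨(3 * C) ^ q⁻¹, by positivity, fun u hdiv i => ?_⟩
  set M := eLpNorm (fun x => toE3 (((2 : ℝ) • strainW u x).mulVec ![0, 0, 1])) (ENNReal.ofReal q) volume with hM
  rcases eq_or_ne M ⊤ with hT | hT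
  · rw [hT, ENNReal.mul_top]
    · exact le_top
    · have : 0 < (3 * C) ^ q⁻¹ := by positivity
      simpa using this
  have key := hb (fun j => dd j (u 2) + dd 2 (u j)) (u 2) (lap_eq u hdiv) i
  have hm : ∀ j, ∫ x, |(dd j (u 2) + dd 2 (u j)) x| ^ q ≤ M.toReal ^ q := by
    intro j
    have h1 : eLpNorm (dd j (u 2) + dd 2 (u j) : 𝓢(E3, ℝ)) (ENNReal.ofReal q) volume ≤ M := by
      refine eLpNorm_mono fun x => ?_
      have := PiLp.norm_apply_le (toE3 (((2 : ℝ) • strainW u x).mulVec ![0, 0, 1])) j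
      rw [strain_apply] at this
      exact this
    have hnn : 0 ≤ ∫ x, |(dd j (u 2) + dd 2 (u j)) x| ^ q := integral_nonneg fun x => by positivity
    rw [eLp_schwartz _ hq, ENNReal.ofReal_le_iff_le_toReal hT] at h1
    have h2 := Real.rpow_le_rpow (by positivity) h1 hq.le
    rwa [← Real.rpow_mul hnn, inv_mul_cancel₀ hq.ne', Real.rpow_one] at h2
  have hs : ∑ j, ∫ x, |(dd j (u 2) + dd 2 (u j)) x| ^ q ≤ 3 * M.toReal ^ q := by
    refine (Finset.sum_le_sum fun j _ => hm j).trans ?_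
    simp
  have e : eLpNorm (fun x => pdW u i 2 x) (ENNReal.ofReal q) volume = eLpNorm (dd i (u 2)) (ENNReal.ofReal q) volume := rfl
  rw [e, eLp_schwartz _ hq, ← ENNReal.ofReal_toReal hT, ← ENNReal.ofReal_mul (by positivity)]
  refine ENNReal.ofReal_le_ofReal ?_
  have hnn : 0 ≤ ∫ x, |dd i (u 2) x| ^ q := integral_nonneg fun x => by positivity
  have k2 : ∫ x, |dd i (u 2) x| ^ q ≤ (3 * C) * M.toReal ^ q :=
    key.trans ((mul_le_mul_of_nonneg_left hs hC.le).trans (le_of_eq (by ring)))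
  have k3 := Real.rpow_le_rpow hnn k2 (by positivity : 0 ≤ q⁻¹)
  rwa [Real.mul_rpow (by positivity) (by positivity), ← Real.rpow_mul ENNReal.toReal_nonneg,
    mul_inv_cancel₀ hq.ne', Real.rpow_one] at k3

lemma pdW_cont (u : Fin 3 → 𝓢(E3, ℝ)) (i j : Fin 3) : Continuous fun x => pdW u i j x := (dd i (u j)).continuous

lemma toE3_cont {v : E3 → Fin 3 → ℝ} (hv : ∀ i, Continuous fun x => v x i) : Continuous fun x => toE3 (v x) := by
  unfold toE3
  have : Continuous v := continuous_pi hv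
  exact (PiLp.continuous_toLp 2 _).comp this

lemma vec_le {v : E3 → Fin 3 → ℝ} (hv : ∀ i, Continuous fun x => v x i) {q : ENNReal} (hq : 1 ≤ q) :
    eLpNorm (fun x => toE3 (v x)) q volume ≤ ∑ i, eLpNorm (fun x => v x i) q volume := by
  have h1 : eLpNorm (fun x => toE3 (v x)) q volume ≤ eLpNorm (∑ i, fun x => |v x i|) q volume := by
    refine eLpNorm_mono fun x => ?_
    have e : (∑ i, fun x => |v x i|) x = ∑ i, |v x i| := by simp
    have hnn : 0 ≤ ∑ i, |v x i| := Finset.sum_nonneg fun i _ => abs_nonneg _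
    rw [e, Real.norm_of_nonneg hnn, EuclideanSpace.norm_eq]
    refine Real.sqrt_le_iff.2 ⟨hnn, ?_⟩
    have := Finset.sum_sq_le_sq_sum_of_nonneg (s := Finset.univ) (f := fun i => |v x i|) fun i _ => abs_nonneg _
    exact this
  refine h1.trans ((eLpNorm_sum_le (fun i _ => (hv i).abs.aestronglyMeasurable) hq).trans ?_)
  refine Finset.sum_le_sum fun i _ => ?_
  exact eLpNorm_mono fun x => by simp

end HeatCZ

/-- For every `1 < q < ∞` there is a constant `C_q > 0` such that for
every divergence-free Schwartz vector field `u : ℝ³ → ℝ³` with strain tensor `S`,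
`‖∇u₃‖_{L^q} + ‖∂₃u‖_{L^q} ≤ C_q ‖2 S e₃‖_{L^q}`. -/
theorem grad_add_d3_le_two_strain_e3 (q : ℝ) (hq1 : 1 < q) :
    ∃ C : ℝ, 0 < C ∧
      ∀ u : Fin 3 → SchwartzMap (EuclideanSpace ℝ (Fin 3)) ℝ,
        (∀ x, ∑ i, pdW u i i x = 0) →
        eLpNorm (fun x => toE3 fun i => pdW u i 2 x) (ENNReal.ofReal q) volume
            + eLpNorm (fun x => toE3 fun i => pdW u 2 i x) (ENNReal.ofReal q) volume
          ≤ ENNReal.ofReal C *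
              eLpNorm (fun x => toE3 (((2 : ℝ) • strainW u x).mulVec ![0, 0, 1]))
                (ENNReal.ofReal q) volume := by
  obtain ⟨D, hD, hb⟩ := HeatCZ.grad_bound q hq1
  refine ⟨1 + 6 * D, by positivity, fun u hdiv => ?_⟩
  set M := eLpNorm (fun x => toE3 (((2 : ℝ) • strainW u x).mulVec ![0, 0, 1])) (ENNReal.ofReal q) volume with hM
  have hq : (1 : ENNReal) ≤ ENNReal.ofReal q := by simpa using hq1.le
  have h1 : eLpNorm (fun x => toE3 fun i => pdW u i 2 x) (ENNReal.ofReal q) volume ≤ ENNReal.ofReal (3 * D) * M := by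
    refine (HeatCZ.vec_le (v := fun x i => pdW u i 2 x) (fun i => HeatCZ.pdW_cont u i 2) hq).trans ?_
    refine (Finset.sum_le_sum fun i _ => hb u hdiv i).trans (le_of_eq ?_)
    rw [Finset.sum_const, Finset.card_univ, Fintype.card_fin, nsmul_eq_mul, ← mul_assoc,
      ENNReal.ofReal_mul (by norm_num), hM]
    simp
  have h2 : eLpNorm (fun x => toE3 fun i => pdW u 2 i x) (ENNReal.ofReal q) volume
      ≤ M + eLpNorm (fun x => toE3 fun i => pdW u i 2 x) (ENNReal.ofReal q) volume := by
    have e : (fun x => toE3 fun i => pdW u 2 i x) =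
        (fun x => toE3 (((2 : ℝ) • strainW u x).mulVec ![0, 0, 1])) - fun x => toE3 fun i => pdW u i 2 x := by
      funext x
      ext i
      have := HeatCZ.strain_apply u x i
      simp only [Pi.sub_apply, PiLp.sub_apply]
      rw [this]
      simp [toE3]
    rw [e]
    refine eLpNorm_sub_le ?_ ?_ hq
    · refine (HeatCZ.toE3_cont fun i => ?_).aestronglyMeasurable
      have : (fun x => (((2 : ℝ) • strainW u x).mulVec ![0, 0, 1]) i) = fun x => pdW u i 2 x + pdW u 2 i x :=
        funext fun x => HeatCZ.strain_apply u x i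
      rw [this]
      exact (HeatCZ.pdW_cont u i 2).add (HeatCZ.pdW_cont u 2 i)
    · exact (HeatCZ.toE3_cont fun i => HeatCZ.pdW_cont u i 2).aestronglyMeasurable
  calc _ ≤ ENNReal.ofReal (3 * D) * M + (M + ENNReal.ofReal (3 * D) * M) :=
        add_le_add h1 (h2.trans (by gcongr))
    _ = ENNReal.ofReal (1 + 6 * D) * M := by
      rw [show 1 + 6 * D = 1 + (3 * D + 3 * D) by ring, ENNReal.ofReal_add (by norm_num) (by positivity),
        ENNReal.ofReal_add (by positivity) (by positivity), ENNReal.ofReal_one]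
      ring
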